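/- arXiv:1407.3927 — 2 statements merged into one kernel-verified Lean document; each statement's English description precedes it below -/
import Mathlib

section
/- Let d ≥ 1 and k ≥ 1 be integers, let h = (h₁,…,h_d) satisfy 0 < h₁ ≤ ⋯ ≤ h_d ≤ 1, and let p ∈ P_h. Then sup_{t ≥ 0} |p⁽ᵏ⁾(t)| ≤ M_{k,d} · sup_{t ≥ 0} |p(t)|, where p⁽ᵏ⁾ denotes the k-th derivative of p. (Uniform Markov–Bernstein inequality for exponential polynomials: the sharp constant over the simplex of exponents is attained when all exponents equal 1.) -/
/-- The sup of `|p|` over the half-line `[0, ∞)`. -/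
noncomputable def supAbs (p : ℝ → ℝ) : ℝ :=
  sSup ((fun t => |p t|) '' Set.Ici (0 : ℝ))

/-- The space `P_h` of exponential polynomials with exponents `h₁ ≤ ⋯ ≤ h_d`:
the span of the functions `t^m * exp (-h i * t)`, where `m` is the number of
indices `j < i` with `h j = h i`.  For `h` nondecreasing this is exactly the set of
functions `t ↦ Σⱼ qⱼ(t) exp (-gⱼ t)` over the distinct values `gⱼ` of `h`, with
`deg qⱼ <` multiplicity of `gⱼ`. -/
def expPoly (d : ℕ) (h : Fin d → ℝ) : Set (ℝ → ℝ) :=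
  {p | ∃ c : Fin d → ℝ, ∀ t : ℝ,
      p t = ∑ i : Fin d,
        c i * t ^ (Nat.card {j : Fin d // j < i ∧ h j = h i}) * Real.exp (-(h i) * t)}

/-- The sharp Markov–Bernstein constant `M_{k,d}` for the Laguerre-weighted system:
the supremum of `sup_{t ≥ 0} |(e^{-t} q(t))⁽ᵏ⁾|` over real polynomials `q` of degree
at most `d - 1` with `sup_{t ≥ 0} e^{-t} |q(t)| ≤ 1`. -/
noncomputable def Mkd (k d : ℕ) : ℝ :=
  sSup {M : ℝ | ∃ q : Polynomial ℝ, q.natDegree ≤ d - 1 ∧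
      supAbs (fun t => Real.exp (-t) * q.eval t) ≤ 1 ∧
      M = supAbs (iteratedDeriv k (fun t => Real.exp (-t) * q.eval t))}


open Polynomial Filter Topology

namespace MB

/-- smooth functions -/
noncomputable def W : Submodule ℝ (ℝ → ℝ) where
  carrier := {f | ContDiff ℝ (⊤ : ℕ∞) f}
  add_mem' := by
    intro f g hf hg
    simp only [Set.mem_ofPred_eq] at *
    exact hf.add hg
  zero_mem' := by
    simp only [Set.mem_ofPred_eq]
    exact contDiff_const
  smul_mem' := by
    intro c f hf
    simp only [Set.mem_ofPred_eq] at *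
    exact hf.const_smul c

lemma W.cd (f : W) : ContDiff ℝ (⊤ : ℕ∞) (f : ℝ → ℝ) := f.2

lemma W.diff (f : W) : Differentiable ℝ (f : ℝ → ℝ) :=
  (W.cd f).differentiable (by simp)

noncomputable def DD : W →ₗ[ℝ] W where
  toFun f := ⟨deriv f, (contDiff_infty_iff_deriv.1 (W.cd f)).2⟩
  map_add' f g := by
    ext t
    exact deriv_add (W.diff f t) (W.diff g t)
  map_smul' c f := by
    ext t
    exact deriv_const_smul c (W.diff f t)


lemma DD_hd (f : W) (t : ℝ) : HasDerivAt (f : ℝ → ℝ) ((DD f).1 t) t :=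
  (W.diff f t).hasDerivAt

lemma W.cont (f : W) : Continuous (f : ℝ → ℝ) := (W.diff f).continuous

noncomputable def op (P : ℝ[X]) : Module.End ℝ W := aeval DD P

noncomputable def PP (s : Multiset ℝ) : ℝ[X] := (s.map fun g => X + C g).prod

def K (s : Multiset ℝ) (f : W) : Prop := op (PP s) f = 0

lemma op_mul (P Q : ℝ[X]) (f : W) : op (P * Q) f = op P (op Q f) := by
  simp [op]

lemma op_comm (P Q : ℝ[X]) (f : W) : op P (op Q f) = op Q (op P f) := by
  rw [← op_mul, ← op_mul, mul_comm]

noncomputable def L (g : ℝ) (f : W) : W := DD f + g • f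

lemma op_lin (g : ℝ) (f : W) : op (X + C g) f = L g f := by
  simp [op, L, Module.algebraMap_end_apply]

lemma op_X (f : W) : op X f = DD f := by simp [op]

lemma op_Xpow (k : ℕ) (f : W) : op (X ^ k) f = (DD ^ k) f := by simp [op]

lemma L_apply (g : ℝ) (f : W) (t : ℝ) : (L g f).1 t = (DD f).1 t + g * f.1 t := rfl

lemma op_cons (g : ℝ) (s : Multiset ℝ) (f : W) : op (PP (g ::ₘ s)) f = op (PP s) (L g f) := by
  rw [PP, Multiset.map_cons, Multiset.prod_cons, mul_comm, op_mul, op_lin]; rfl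

lemma op_cons' (g : ℝ) (s : Multiset ℝ) (f : W) : op (PP (g ::ₘ s)) f = L g (op (PP s) f) := by
  rw [PP, Multiset.map_cons, Multiset.prod_cons, op_mul, op_lin]; rfl

lemma op_nil (f : W) : op (PP 0) f = f := by
  simp [op, PP]

lemma K_nil (f : W) : K 0 f ↔ f = 0 := by rw [K, op_nil]

lemma K_cons (g : ℝ) (s : Multiset ℝ) (f : W) : K (g ::ₘ s) f ↔ K s (L g f) := by
  rw [K, op_cons, K]

lemma K_cons_of (g : ℝ) (s : Multiset ℝ) (f : W) (hf : K s f) : K (g ::ₘ s) f := by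
  rw [K, op_cons', hf]; simp [L]

lemma K_sub (s : Multiset ℝ) (f g : W) (hf : K s f) (hg : K s g) : K s (f - g) := by
  rw [K, map_sub, hf, hg, sub_zero]

lemma K_add (s : Multiset ℝ) (f g : W) (hf : K s f) (hg : K s g) : K s (f + g) := by
  rw [K, map_add, hf, hg, add_zero]

lemma K_smul (s : Multiset ℝ) (c : ℝ) (f : W) (hf : K s f) : K s (c • f) := by
  rw [K, map_smul, hf, smul_zero]

lemma K_sum {ι : Type*} (s : Multiset ℝ) (S : Finset ι) (c : ι → ℝ) (f : ι → W)
    (hf : ∀ i ∈ S, K s (f i)) : K s (∑ i ∈ S, c i • f i) := by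
  rw [K, map_sum]
  refine Finset.sum_eq_zero fun i hi => ?_
  rw [map_smul, hf i hi, smul_zero]

lemma K_DD (s : Multiset ℝ) (f : W) (hf : K s f) : K s (DD f) := by
  rw [K, ← op_X, op_comm, hf, map_zero]

lemma K_DDpow (s : Multiset ℝ) (k : ℕ) (f : W) (hf : K s f) : K s ((DD ^ k) f) := by
  rw [K, ← op_Xpow, op_comm, hf, map_zero]

lemma iterD (k : ℕ) (f : W) : iteratedDeriv k (f : ℝ → ℝ) = ((DD ^ k) f).1 := by
  induction k generalizing f with
  | zero => simp
  | succ n ih =>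
    rw [iteratedDeriv_succ', pow_succ, Module.End.mul_apply, ← ih]; rfl

/-- exponential factor -/
lemma hd_exp (g : ℝ) (f : W) (t : ℝ) :
    HasDerivAt (fun t => Real.exp (g * t) * f.1 t) (Real.exp (g * t) * (L g f).1 t) t := by
  have h1 : HasDerivAt (fun t => Real.exp (g * t)) (Real.exp (g * t) * g) t := by
    have := ((hasDerivAt_id t).const_mul g).exp
    simpa using this
  have := h1.mul (DD_hd f t)
  have e : Real.exp (g * t) * (L g f).1 t
      = Real.exp (g * t) * g * f.1 t + Real.exp (g * t) * (DD f).1 t := by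
    rw [L_apply]; ring
  rw [e]
  exact this

lemma L_zero_exp (g : ℝ) (f : W) (hf : L g f = 0) (t u : ℝ) :
    Real.exp (g * t) * f.1 t = Real.exp (g * u) * f.1 u := by
  apply is_const_of_deriv_eq_zero (f := fun t => Real.exp (g * t) * f.1 t)
  · intro t; exact (hd_exp g f t).differentiableAt
  · intro t
    rw [(hd_exp g f t).deriv, hf]; simp

/-- Rolle with finsets. -/
lemma rolle_fin (f f' : ℝ → ℝ) (hf : ∀ t, HasDerivAt f (f' t) t) (Z : Finset ℝ)
    (hZ : ∀ z ∈ Z, f z = 0) :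
    ∃ Z' : Finset ℝ, Z.card ≤ Z'.card + 1 ∧
      ∀ w ∈ Z', f' w = 0 ∧ (∃ z ∈ Z, z < w) ∧ (∃ z ∈ Z, w < z) := by
  induction Z using Finset.induction_on_max with
  | empty => exact ⟨∅, by simp, by simp⟩
  | insert M Z hM ih =>
    obtain ⟨Z', hc, hz⟩ := ih fun z hz => hZ z (Finset.mem_insert_of_mem hz)
    rcases Z.eq_empty_or_nonempty with rfl | hne
    · exact ⟨∅, by simp, by simp⟩
    have hm := Z.max'_mem hne
    obtain ⟨w, hw, hw0⟩ := exists_hasDerivAt_eq_zero (f := f) (f' := f') (hM _ hm)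
      (fun t _ => (hf t).continuousAt.continuousWithinAt)
      (by rw [hZ _ (Finset.mem_insert_of_mem hm), hZ _ (Finset.mem_insert_self _ _)])
      (fun t _ => hf t)
    have hwZ : w ∉ Z' := by
      intro h
      obtain ⟨z, hz1, hz2⟩ := (hz w h).2.2
      have := Z.le_max' z hz1
      linarith [hw.1]
    refine ⟨insert w Z', ?_, ?_⟩
    · rw [Finset.card_insert_of_notMem hwZ, Finset.card_insert_of_notMem]
      · omega
      · intro h; exact lt_irrefl _ (hM _ h)
    · intro x hx
      rcases Finset.mem_insert.1 hx with rfl | hx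
      · exact ⟨hw0, ⟨_, Finset.mem_insert_of_mem hm, hw.1⟩, ⟨_, Finset.mem_insert_self _ _, hw.2⟩⟩
      · obtain ⟨h1, ⟨a, ha, ha'⟩, ⟨b, hb, hb'⟩⟩ := hz x hx
        exact ⟨h1, ⟨a, Finset.mem_insert_of_mem ha, ha'⟩, ⟨b, Finset.mem_insert_of_mem hb, hb'⟩⟩

lemma rolle_L (g : ℝ) (f : W) (Z : Finset ℝ) (hZ : ∀ z ∈ Z, f.1 z = 0) :
    ∃ Z' : Finset ℝ, Z.card ≤ Z'.card + 1 ∧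
      ∀ w ∈ Z', (L g f).1 w = 0 ∧ (∃ z ∈ Z, z < w) ∧ (∃ z ∈ Z, w < z) := by
  obtain ⟨Z', h1, h2⟩ := rolle_fin _ _ (hd_exp g f) Z (fun z hz => by simp [hZ z hz])
  refine ⟨Z', h1, fun w hw => ?_⟩
  obtain ⟨h3, h4⟩ := h2 w hw
  exact ⟨(mul_eq_zero.1 h3).resolve_left (Real.exp_pos _).ne', h4⟩

/-- At most `card s - 1` zeros. -/
lemma K_zeros (s : Multiset ℝ) (f : W) (hf : K s f) (Z : Finset ℝ)
    (hc : Multiset.card s ≤ Z.card) (hZ : ∀ z ∈ Z, f.1 z = 0) : f = 0 := by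
  induction s using Multiset.induction_on generalizing f Z with
  | empty => exact (K_nil f).1 hf
  | cons g s ih =>
    rw [Multiset.card_cons] at hc
    obtain ⟨Z', h1, h2⟩ := rolle_L g f Z hZ
    have h0 := ih (L g f) ((K_cons g s f).1 hf) Z' (by omega) (fun w hw => (h2 w hw).1)
    obtain ⟨z, hz⟩ : Z.Nonempty := Finset.card_pos.1 (by omega)
    ext t
    have := L_zero_exp g f h0 t z
    rw [hZ z hz, mul_zero] at this
    exact (mul_eq_zero.1 this).resolve_left (Real.exp_pos _).ne'

/-- decay -/
lemma K_decay (s : Multiset ℝ) (f : W) (hf : K s f) (e : ℝ) (he : ∀ g ∈ s, e < g) :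
    ∃ A : ℝ, 0 ≤ A ∧ ∀ t, 0 ≤ t → |f.1 t| ≤ A * Real.exp (-e * t) := by
  induction s using Multiset.induction_on generalizing f with
  | empty =>
    refine ⟨0, le_rfl, fun t _ => ?_⟩
    rw [(K_nil f).1 hf]; simp
  | cons g s ih =>
    obtain ⟨A, hA, hAt⟩ := ih (L g f) ((K_cons g s f).1 hf)
      (fun g hg => he g (Multiset.mem_cons_of_mem hg))
    have hge : 0 < g - e := sub_pos.2 (he g (Multiset.mem_cons_self g s))
    have key : ∀ σ : ℝ, |σ| = 1 → ∀ t, 0 ≤ t →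
        σ * (Real.exp (g * t) * f.1 t) - A / (g - e) * Real.exp ((g - e) * t) ≤
          σ * f.1 0 - A / (g - e) := by
      intro σ hσ t ht
      have hd : ∀ t, HasDerivAt (fun t => σ * (Real.exp (g * t) * f.1 t) -
          A / (g - e) * Real.exp ((g - e) * t))
          (σ * (Real.exp (g * t) * (L g f).1 t) -
            A / (g - e) * (Real.exp ((g - e) * t) * (g - e))) t := by
        intro t
        refine ((hd_exp g f t).const_mul σ).sub (HasDerivAt.const_mul _ ?_)
        have := ((hasDerivAt_id t).const_mul (g - e)).exp
        simpa using this
      have han : AntitoneOn (fun t => σ * (Real.exp (g * t) * f.1 t) -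
          A / (g - e) * Real.exp ((g - e) * t)) (Set.Ici 0) := by
        refine antitoneOn_of_deriv_nonpos (convex_Ici 0)
          (fun t _ => (hd t).continuousAt.continuousWithinAt)
          (fun t _ => (hd t).differentiableAt.differentiableWithinAt) ?_
        intro t ht
        rw [interior_Ici] at ht
        rw [(hd t).deriv]
        have h1 : σ * (L g f).1 t ≤ A * Real.exp (-e * t) := by
          refine le_trans (le_abs_self _) ?_
          rw [abs_mul, hσ, one_mul]; exact hAt t (le_of_lt ht)
        have h2 : Real.exp ((g - e) * t) = Real.exp (g * t) * Real.exp (-e * t) := by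
          rw [← Real.exp_add]; ring_nf
        have h3 : A / (g - e) * (Real.exp ((g - e) * t) * (g - e))
            = Real.exp (g * t) * (A * Real.exp (-e * t)) := by
          rw [h2]; field_simp
        rw [h3]
        have := mul_le_mul_of_nonneg_left h1 (Real.exp_pos (g * t)).le
        linarith
      have := han (Set.mem_Ici.2 le_rfl) (Set.mem_Ici.2 ht) ht
      simpa using this
    refine ⟨A / (g - e) + |f.1 0|, by positivity, fun t ht => ?_⟩
    have hE := Real.exp_pos (g * t)
    have h1 := key 1 (by simp) t ht
    have h2 := key (-1) (by simp) t ht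
    have h3 : Real.exp (g * t) * Real.exp (-e * t) = Real.exp ((g - e) * t) := by
      rw [← Real.exp_add]; ring_nf
    have h4 : 1 ≤ Real.exp ((g - e) * t) := Real.one_le_exp (by positivity)
    have h5 : 0 ≤ A / (g - e) := by positivity
    have h6 : Real.exp (g * t) * |f.1 t| ≤
        Real.exp (g * t) * ((A / (g - e) + |f.1 0|) * Real.exp (-e * t)) := by
      have h7 : Real.exp (g * t) * |f.1 t| = |Real.exp (g * t) * f.1 t| := by
        rw [abs_mul, abs_of_pos hE]
      have h8 : Real.exp (g * t) * ((A / (g - e) + |f.1 0|) * Real.exp (-e * t))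
         = (A / (g - e) + |f.1 0|) * Real.exp ((g - e) * t) := by rw [← h3]; ring
      rw [h7, h8]
      have h9 : |f.1 0| ≤ |f.1 0| * Real.exp ((g - e) * t) :=
        le_mul_of_one_le_right (abs_nonneg _) h4
      have := neg_abs_le (f.1 0)
      have := le_abs_self (f.1 0)
      rw [abs_le]; constructor <;> nlinarith
    exact le_of_mul_le_mul_left h6 hE

lemma exists_lower (s : Multiset ℝ) (hs : ∀ g ∈ s, 0 < g) : ∃ e : ℝ, 0 < e ∧ ∀ g ∈ s, e < g := by
  induction s using Multiset.induction_on with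
  | empty => exact ⟨1, one_pos, by simp⟩
  | cons g s ih =>
    obtain ⟨e, he, h⟩ := ih fun g hg => hs g (Multiset.mem_cons_of_mem hg)
    have := hs g (Multiset.mem_cons_self g s)
    refine ⟨min e (g / 2), by positivity, fun x hx => ?_⟩
    rcases Multiset.mem_cons.1 hx with rfl | hx
    · exact lt_of_le_of_lt (min_le_right _ _) (by linarith)
    · exact lt_of_le_of_lt (min_le_left _ _) (h x hx)

lemma K_tendsto (s : Multiset ℝ) (hs : ∀ g ∈ s, 0 < g) (f : W) (hf : K s f) :
    Tendsto f.1 atTop (𝓝 0) := by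
  obtain ⟨e, he, h⟩ := exists_lower s hs
  obtain ⟨A, hA, hb⟩ := K_decay s f hf e h
  have h1 : Tendsto (fun t : ℝ => A * Real.exp (-e * t)) atTop (𝓝 0) := by
    rw [← mul_zero A]
    refine Tendsto.const_mul A (Real.tendsto_exp_atBot.comp ?_)
    exact tendsto_id.const_mul_atTop_of_neg (by linarith)
  refine squeeze_zero_norm' ?_ h1
  filter_upwards [eventually_ge_atTop 0] with t ht using hb t ht

lemma K_bdd (s : Multiset ℝ) (hs : ∀ g ∈ s, 0 < g) (f : W) (hf : K s f) :
    BddAbove ((fun t => |f.1 t|) '' Set.Ici (0 : ℝ)) := by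
  obtain ⟨A, hA, hb⟩ := K_decay s f hf 0 hs
  refine ⟨A, ?_⟩
  rintro _ ⟨t, ht, rfl⟩
  simpa using hb t ht

lemma rolle_inf (f f' : ℝ → ℝ) (hf : ∀ t, HasDerivAt f (f' t) t) (h0 : Tendsto f atTop (𝓝 0))
    (z : ℝ) (hz : f z = 0) : ∃ w, z < w ∧ f' w = 0 := by
  have hc : Continuous f := continuous_iff_continuousAt.2 fun t => (hf t).continuousAt
  wlog hy : 0 ≤ f (z + 1) generalizing f f'
  · obtain ⟨w, h1, h2⟩ := this (fun t => - f t) (fun t => - f' t) (fun t => (hf t).neg)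
      (by simpa using h0.neg) (by simp [hz]) hc.neg (by linarith)
    exact ⟨w, h1, by simpa using h2⟩
  rcases hy.eq_or_lt with hy | hy
  · obtain ⟨w, hw, h⟩ := exists_hasDerivAt_eq_zero (f := f) (f' := f') (lt_add_one z)
      hc.continuousOn (by rw [hz, hy]) (fun t _ => hf t)
    exact ⟨w, hw.1, h⟩
  obtain ⟨T, hT1, hT2⟩ := ((h0.eventually (gt_mem_nhds (half_pos hy))).and
    (eventually_gt_atTop (z + 1))).exists
  obtain ⟨a, ha, ha'⟩ := intermediate_value_Icc (lt_add_one z).le hc.continuousOn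
    (show f (z + 1) / 2 ∈ Set.Icc (f z) (f (z + 1)) from ⟨by linarith, by linarith⟩)
  obtain ⟨b, hb, hb'⟩ := intermediate_value_Icc' hT2.le hc.continuousOn
    (show f (z + 1) / 2 ∈ Set.Icc (f T) (f (z + 1)) from ⟨hT1.le, by linarith⟩)
  have hab : a < b := by
    rcases (ha.2.trans hb.1).eq_or_lt with h | h
    · exfalso
      have : a = z + 1 := le_antisymm ha.2 (by linarith [hb.1])
      rw [this] at ha'; linarith
    · exact h
  obtain ⟨w, hw, h⟩ := exists_hasDerivAt_eq_zero (f := f) (f' := f') hab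
      hc.continuousOn (by rw [ha', hb']) (fun t _ => hf t)
  exact ⟨w, ha.1.trans_lt hw.1, h⟩

lemma rolle_D (s : Multiset ℝ) (hs : ∀ g ∈ s, 0 < g) (f : W) (hf : K s f) (Z : Finset ℝ)
    (hZ : ∀ z ∈ Z, 0 ≤ z ∧ f.1 z = 0) :
    ∃ Z' : Finset ℝ, Z.card ≤ Z'.card ∧ ∀ w ∈ Z', 0 < w ∧ (DD f).1 w = 0 := by
  obtain ⟨Z', h1, h2⟩ := rolle_fin _ _ (DD_hd f) Z (fun z hz => (hZ z hz).2)
  rcases Z.eq_empty_or_nonempty with rfl | hne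
  · exact ⟨∅, by simp, by simp⟩
  have hm := Z.max'_mem hne
  obtain ⟨w, hw, hw0⟩ := rolle_inf _ _ (DD_hd f) (K_tendsto s hs f hf) _ (hZ _ hm).2
  have hwZ : w ∉ Z' := by
    intro h
    obtain ⟨z, hz1, hz2⟩ := (h2 w h).2.2
    have := Z.le_max' z hz1
    linarith
  refine ⟨insert w Z', by rw [Finset.card_insert_of_notMem hwZ]; exact h1, ?_⟩
  intro x hx
  rcases Finset.mem_insert.1 hx with rfl | hx
  · exact ⟨lt_of_le_of_lt (hZ _ hm).1 hw, hw0⟩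
  · obtain ⟨h3, ⟨a, ha, ha'⟩, _⟩ := h2 x hx
    exact ⟨lt_of_le_of_lt (hZ _ ha).1 ha', h3⟩

lemma rolle_Dpow (s : Multiset ℝ) (hs : ∀ g ∈ s, 0 < g) (k : ℕ) (hk : 1 ≤ k) (f : W) (hf : K s f)
    (Z : Finset ℝ) (hZ : ∀ z ∈ Z, 0 ≤ z ∧ f.1 z = 0) :
    ∃ Z' : Finset ℝ, Z.card ≤ Z'.card ∧ ∀ w ∈ Z', 0 < w ∧ ((DD ^ k) f).1 w = 0 := by
  induction k, hk using Nat.le_induction with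
  | base => simpa using rolle_D s hs f hf Z hZ
  | succ k hk ih =>
    obtain ⟨Z1, h1, h2⟩ := ih
    obtain ⟨Z2, h3, h4⟩ := rolle_D s hs ((DD ^ k) f) (K_DDpow s k f hf) Z1
      (fun w hw => ⟨(h2 w hw).1.le, (h2 w hw).2⟩)
    refine ⟨Z2, h1.trans h3, fun w hw => ?_⟩
    rw [pow_succ', Module.End.mul_apply]
    exact h4 w hw

/-- Sign lemma. -/
lemma sign_lemma (s : Multiset ℝ) (b : ℝ) (f : W) (hf : K (b ::ₘ s) f) (Z : Finset ℝ)
    (hc : Multiset.card s ≤ Z.card) (hZ : ∀ z ∈ Z, 0 < z ∧ f.1 z = 0) :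
    0 ≤ (-1) ^ (Multiset.card s) * f.1 0 * (op (PP s) f).1 0 := by
  induction s using Multiset.induction_on generalizing f Z with
  | empty => rw [op_nil]; simpa using mul_self_nonneg _
  | cons g s ih =>
    rw [Multiset.card_cons] at hc ⊢
    rw [op_cons]
    have hK : K (b ::ₘ s) (L g f) := by
      rw [Multiset.cons_swap, K_cons] at hf; exact hf
    have hne : Z.Nonempty := Finset.card_pos.1 (by omega)
    have hm := Z.min'_mem hne
    set z0 := Z.min' hne with hz0
    obtain ⟨Z', h1, h2⟩ := rolle_L g f Z (fun z hz => (hZ z hz).2)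
    have hz' : ∀ w ∈ Z', z0 < w := by
      intro w hw
      obtain ⟨z, hz, hzw⟩ := (h2 w hw).2.1
      exact lt_of_le_of_lt (Z.min'_le z hz) hzw
    have hz0pos := (hZ z0 hm).1
    have IH := ih (L g f) hK Z' (by omega) (fun w hw => ⟨hz0pos.trans (hz' w hw), (h2 w hw).1⟩)
    by_cases h0 : L g f = 0
    · rw [h0]; simp
    have hnz : ∀ x, x ≤ z0 → (L g f).1 x ≠ 0 := by
      intro x hx hx0
      apply h0
      have hxZ : x ∉ Z' := fun h => by linarith [hz' x h]
      refine K_zeros _ _ hK (insert x Z') ?_ ?_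
      · rw [Finset.card_insert_of_notMem hxZ, Multiset.card_cons]; omega
      · intro w hw
        rcases Finset.mem_insert.1 hw with rfl | hw
        · exact hx0
        · exact (h2 w hw).1
    obtain ⟨ξ, hξ, hξ'⟩ := exists_hasDerivAt_eq_slope (fun t => Real.exp (g * t) * f.1 t)
      (fun t => Real.exp (g * t) * (L g f).1 t) hz0pos
      (fun t _ => (hd_exp g f t).continuousAt.continuousWithinAt) (fun t _ => hd_exp g f t)
    have hf0 : f.1 0 = - (z0 * Real.exp (g * ξ)) * (L g f).1 ξ := by
      simp only [(hZ z0 hm).2, mul_zero, Real.exp_zero, one_mul, sub_zero] at hξ'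
      field_simp at hξ'
      linarith
    have hsgn : 0 < (L g f).1 0 * (L g f).1 ξ := by
      by_contra hcon
      push Not at hcon
      have hcont := (W.cont (L g f)).continuousOn (s := Set.Icc 0 ξ)
      have : ∃ x ∈ Set.Icc 0 ξ, (L g f).1 x = 0 := by
        rcases le_total 0 ((L g f).1 0) with h | h
        · have h5 : (L g f).1 ξ ≤ 0 := by
            have := lt_of_le_of_ne h (Ne.symm (hnz 0 hz0pos.le))
            by_contra h6; push Not at h6
            nlinarith [mul_pos this h6]
          exact intermediate_value_Icc' hξ.1.le hcont ⟨h5, h⟩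
        · have h5 : 0 ≤ (L g f).1 ξ := by
            have := lt_of_le_of_ne h (hnz 0 hz0pos.le)
            by_contra h6; push Not at h6
            nlinarith [mul_pos_of_neg_of_neg this h6]
          exact intermediate_value_Icc hξ.1.le hcont ⟨h, h5⟩
      obtain ⟨x, hx, hx0⟩ := this
      exact hnz x (hx.2.trans hξ.2.le) hx0
    -- combine
    set A := (L g f).1 0
    set B := (L g f).1 ξ
    set H := (op (PP s) (L g f)).1 0
    set e := (-1 : ℝ) ^ Multiset.card s with he
    have hA : A ≠ 0 := hnz 0 hz0pos.le
    rw [hf0, pow_succ, ← he]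
    have hfac : 0 < z0 * Real.exp (g * ξ) := by positivity
    have hA2 : 0 < A ^ 2 := by positivity
    have : 0 ≤ A ^ 2 * (e * -1 * (-(z0 * Real.exp (g * ξ)) * B) * H) := by
      have : A ^ 2 * (e * -1 * (-(z0 * Real.exp (g * ξ)) * B) * H)
        = (z0 * Real.exp (g * ξ)) * (A * B) * (e * A * H) := by ring
      rw [this]; positivity
    exact nonneg_of_mul_nonneg_right this hA2

/-- Monotonicity of the Lagrange weights in one exponent. -/
lemma mono_one (s : Multiset ℝ) (hs : ∀ g ∈ s, 0 < g) (a b : ℝ) (ha : 0 < a) (hab : a < b)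
    (k : ℕ) (hk : 1 ≤ k) (X : Finset ℝ) (hX : ∀ x ∈ X, 0 ≤ x) (hXc : X.card = Multiset.card s + 1)
    (x : ℝ) (hx : x ∈ X) (l l' : W) (hl : K (a ::ₘ s) l) (hl' : K (b ::ₘ s) l')
    (hlx : ∀ y ∈ X, l.1 y = if y = x then 1 else 0)
    (hlx' : ∀ y ∈ X, l'.1 y = if y = x then 1 else 0) :
    |((DD ^ k) l).1 0| ≤ |((DD ^ k) l').1 0| := by
  have hsa : ∀ g ∈ a ::ₘ s, 0 < g := by
    intro g hg
    rcases Multiset.mem_cons.1 hg with rfl | hg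
    exacts [ha, hs g hg]
  have hsab : ∀ g ∈ a ::ₘ b ::ₘ s, 0 < g := by
    intro g hg
    rcases Multiset.mem_cons.1 hg with rfl | hg
    · exact ha
    rcases Multiset.mem_cons.1 hg with rfl | hg
    exacts [ha.trans hab, hs g hg]
  set f : W := l' - l with hfdef
  have hKl : K (a ::ₘ b ::ₘ s) l := by rw [Multiset.cons_swap]; exact K_cons_of _ _ _ hl
  have hf : K (a ::ₘ b ::ₘ s) f := K_sub _ _ _ (K_cons_of _ _ _ hl') hKl
  -- zeros
  have hXe : ∀ z ∈ X.erase x, l.1 z = 0 := by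
    intro z hz
    rw [hlx z (Finset.mem_of_mem_erase hz), if_neg (Finset.ne_of_mem_erase hz)]
  have hXec : (X.erase x).card = Multiset.card s := by
    rw [Finset.card_erase_of_mem hx]; omega
  obtain ⟨Z1, hZ1c, hZ1⟩ := rolle_Dpow _ hsa k hk l hl (X.erase x)
    (fun z hz => ⟨hX z (Finset.mem_of_mem_erase hz), hXe z hz⟩)
  obtain ⟨Z2, hZ2c, hZ2⟩ := rolle_Dpow _ hsab k hk f hf X
    (fun z hz => ⟨hX z hz, by
      have : f.1 z = l'.1 z - l.1 z := rfl
      rw [this, hlx z hz, hlx' z hz, sub_self]⟩)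
  have S1 := sign_lemma s a _ (K_DDpow _ k l hl) Z1 (by omega) hZ1
  have S2 := sign_lemma (b ::ₘ s) a _ (K_DDpow _ k f hf) Z2
    (by rw [Multiset.card_cons]; omega) hZ2
  set e : W := op (PP s) l with he
  have hLe : L a e = 0 := by rw [he, ← op_cons']; exact hl
  have hDe : DD e = (-a) • e := by
    rw [L] at hLe
    rw [eq_neg_of_add_eq_zero_left hLe]
    exact (neg_smul a e).symm
  have hDke : (DD ^ k) e = (-a) ^ k • e := by
    clear S1 S2 hZ2 hZ1 hk
    induction k with
    | zero => simp
    | succ n ih => rw [pow_succ, Module.End.mul_apply, hDe, map_smul, ih, smul_smul, ← pow_succ']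
  have hc : e.1 0 ≠ 0 := by
    intro h0
    have : e = 0 := by
      ext t
      have := L_zero_exp a e hLe t 0
      rw [h0, mul_zero] at this
      exact (mul_eq_zero.1 this).resolve_left (Real.exp_pos _).ne'
    have : l = 0 := K_zeros s l this (X.erase x) hXec.ge hXe
    have h1 := hlx x hx
    rw [this] at h1; simp at h1
  have E1 : (op (PP s) ((DD ^ k) l)).1 0 = (-a) ^ k * e.1 0 := by
    rw [← op_Xpow, op_comm, ← he, op_Xpow, hDke]; rfl
  have E2 : (op (PP (b ::ₘ s)) ((DD ^ k) f)).1 0 = -((b - a) * ((-a) ^ k * e.1 0)) := by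
    have h1 : op (PP (b ::ₘ s)) f = -((b - a) • e) := by
      rw [hfdef, map_sub, (show op (PP (b ::ₘ s)) l' = 0 from hl'), op_cons', ← he, L, hDe,
        zero_sub, neg_inj]
      ext t
      change -a * e.1 t + b * e.1 t = (b - a) * e.1 t
      ring
    rw [← op_Xpow, op_comm, op_Xpow, h1, map_neg, map_smul, hDke]; rfl
  rw [E1] at S1
  rw [E2, Multiset.card_cons, pow_succ] at S2
  have E3 : ((DD ^ k) f).1 0 = ((DD ^ k) l').1 0 - ((DD ^ k) l).1 0 := by
    rw [hfdef, map_sub]; rfl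
  rw [E3] at S2
  set w := ((DD ^ k) l).1 0
  set w' := ((DD ^ k) l').1 0
  set u := (-a) ^ k * e.1 0 with hu
  set σ := (-1 : ℝ) ^ Multiset.card s with hσ
  have hu0 : u ≠ 0 := mul_ne_zero (pow_ne_zero _ (by linarith)) hc
  have hσ2 : σ * σ = 1 := by rw [hσ, ← mul_pow]; simp
  have h3 : 0 ≤ (w' - w) * w := by
    have h4 := mul_nonneg S1 S2
    have h5 : σ * w * u * (σ * -1 * (w' - w) * -((b - a) * u))
        = (σ * σ) * ((b - a) * u ^ 2) * ((w' - w) * w) := by ring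
    rw [h5, hσ2, one_mul] at h4
    have : 0 < (b - a) * u ^ 2 := mul_pos (by linarith) (by positivity)
    exact nonneg_of_mul_nonneg_right h4 this
  rw [← sq_le_sq]
  nlinarith [sq_nonneg (w' - w)]

/-- weighted polynomials -/
noncomputable def ew (g : ℝ) (q : ℝ[X]) : W :=
  ⟨fun t => Real.exp (-g * t) * q.eval t, by
    have h1 : ContDiff ℝ (⊤ : ℕ∞) (fun t : ℝ => Real.exp (-g * t)) :=
      (contDiff_const.mul contDiff_id).exp
    have h2 : ContDiff ℝ (⊤ : ℕ∞) (fun t : ℝ => q.eval t) := by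
      simpa using Polynomial.contDiff_aeval q (𝕜 := ℝ) (⊤ : ℕ∞)
    exact h1.mul h2⟩

lemma ew_apply (g : ℝ) (q : ℝ[X]) (t : ℝ) : (ew g q).1 t = Real.exp (-g * t) * q.eval t := rfl

lemma L_ew (g : ℝ) (q : ℝ[X]) : L g (ew g q) = ew g (derivative q) := by
  ext t
  have h1 : HasDerivAt (fun t : ℝ => Real.exp (-g * t)) (Real.exp (-g * t) * -g) t := by
    have := ((hasDerivAt_id t).const_mul (-g)).exp
    simpa using this
  have h2 : (DD (ew g q)).1 t = _ := (h1.mul (q.hasDerivAt t)).deriv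
  change (L g (ew g q)).1 t = (ew g (derivative q)).1 t
  rw [L_apply, h2, ew_apply, ew_apply]; ring

lemma op_ew (g : ℝ) (n : ℕ) (q : ℝ[X]) : op ((X + C g) ^ n) (ew g q) = ew g (derivative^[n] q) := by
  induction n generalizing q with
  | zero => simp [op]
  | succ n ih => rw [pow_succ, op_mul, op_lin, L_ew, ih, Function.iterate_succ_apply]

lemma ew_zero (g : ℝ) : ew g 0 = 0 := by
  ext t
  change (ew g 0).1 t = 0
  simp [ew_apply]

lemma K_ew (s : Multiset ℝ) (g : ℝ) (n : ℕ) (q : ℝ[X]) (hq : q.natDegree < n)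
    (hd : (X + C g) ^ n ∣ PP s) : K s (ew g q) := by
  obtain ⟨Q, hQ⟩ := hd
  rw [K, hQ, mul_comm, op_mul, op_ew, iterate_derivative_eq_zero hq, ew_zero, map_zero]

lemma L_surj (g : ℝ) (r : W) : ∃ u : W, L g u = r := by
  have hG : ContDiff ℝ (⊤ : ℕ∞) (fun t => Real.exp (g * t) * r.1 t) :=
    (contDiff_const.mul contDiff_id).exp.mul (W.cd r)
  have hF : ∀ t, HasDerivAt (fun t => ∫ x in (0 : ℝ)..t, Real.exp (g * x) * r.1 x)
      (Real.exp (g * t) * r.1 t) t := fun t =>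
    intervalIntegral.integral_hasDerivAt_right (hG.continuous.intervalIntegrable _ _)
      hG.continuous.aestronglyMeasurable.stronglyMeasurableAtFilter hG.continuous.continuousAt
  have hFs : ContDiff ℝ (⊤ : ℕ∞) (fun t => ∫ x in (0 : ℝ)..t, Real.exp (g * x) * r.1 x) := by
    rw [contDiff_infty_iff_deriv]
    refine ⟨fun t => (hF t).differentiableAt, ?_⟩
    have : deriv (fun t => ∫ x in (0 : ℝ)..t, Real.exp (g * x) * r.1 x)
      = fun t => Real.exp (g * t) * r.1 t := funext fun t => (hF t).deriv
    rw [this]; exact hG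
  have hE : ContDiff ℝ (⊤ : ℕ∞) (fun t : ℝ => Real.exp (-g * t)) :=
      (contDiff_const.mul contDiff_id).exp
  refine ⟨⟨fun t => Real.exp (-g * t) * ∫ x in (0 : ℝ)..t, Real.exp (g * x) * r.1 x,
    hE.mul hFs⟩, ?_⟩
  ext t
  have h1 : HasDerivAt (fun t : ℝ => Real.exp (-g * t)) (Real.exp (-g * t) * -g) t := by
    have := ((hasDerivAt_id t).const_mul (-g)).exp
    simpa using this
  have h2 := (h1.mul (hF t)).deriv
  change deriv ((fun t => Real.exp (-g * t)) * fun t => ∫ x in (0 : ℝ)..t, Real.exp (g * x) * r.1 x) t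
    + g * (Real.exp (-g * t) * ∫ x in (0 : ℝ)..t, Real.exp (g * x) * r.1 x) = r.1 t
  rw [h2]
  have : Real.exp (-g * t) * Real.exp (g * t) = 1 := by rw [← Real.exp_add]; simp
  linear_combination r.1 t * this

lemma op_surj (s : Multiset ℝ) (r : W) : ∃ u : W, op (PP s) u = r := by
  induction s using Multiset.induction_on generalizing r with
  | empty => exact ⟨r, op_nil r⟩
  | cons g s ih =>
    obtain ⟨v, hv⟩ := L_surj g r
    obtain ⟨u, hu⟩ := ih v
    exact ⟨u, by rw [op_cons', hu, hv]⟩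

/-- Interpolation. -/
lemma interp (s : Multiset ℝ) (X : Finset ℝ) (hX : X.card = Multiset.card s) (y : ℝ → ℝ) :
    ∃ f : W, K s f ∧ ∀ x ∈ X, f.1 x = y x := by
  induction s using Multiset.induction_on generalizing X y with
  | empty =>
    refine ⟨0, (K_nil _).2 rfl, ?_⟩
    rw [Multiset.card_zero, Finset.card_eq_zero] at hX
    simp [hX]
  | cons g s ih =>
    rw [Multiset.card_cons] at hX
    obtain ⟨x0, hx0⟩ : X.Nonempty := Finset.card_pos.1 (by omega)
    have hXe : (X.erase x0).card = Multiset.card s := by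
      rw [Finset.card_erase_of_mem hx0]; omega
    obtain ⟨u, hu⟩ := op_surj s (ew g 1)
    obtain ⟨v, hv, hvu⟩ := ih _ hXe u.1
    obtain ⟨p, hp, hpy⟩ := ih _ hXe y
    have hopuv : op (PP s) (u - v) = ew g 1 := by
      rw [map_sub, hu, (show op (PP s) v = 0 from hv), sub_zero]
    have hKuv : K (g ::ₘ s) (u - v) := by
      rw [K, op_cons', hopuv, L_ew, derivative_one, ew_zero]
    have huv : ∀ x ∈ X.erase x0, (u - v).1 x = 0 := fun x hx => by
      have : (u - v).1 x = u.1 x - v.1 x := rfl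
      rw [this, hvu x hx, sub_self]
    have hne : (u - v).1 x0 ≠ 0 := by
      intro h0
      have h1 : u - v = 0 := by
        refine K_zeros _ _ hKuv X (by rw [Multiset.card_cons]; omega) fun z hz => ?_
        by_cases hzx : z = x0
        · rw [hzx, h0]
        · exact huv z (Finset.mem_erase.2 ⟨hzx, hz⟩)
      rw [h1, map_zero] at hopuv
      have h2 : (0 : W).1 0 = (ew g 1).1 0 := by rw [← hopuv]
      rw [ew_apply] at h2
      simp at h2
    refine ⟨p + ((y x0 - p.1 x0) / (u - v).1 x0) • (u - v),
      K_add _ _ _ (K_cons_of _ _ _ hp) (K_smul _ _ _ hKuv), fun x hx => ?_⟩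
    have h3 : (p + ((y x0 - p.1 x0) / (u - v).1 x0) • (u - v)).1 x
      = p.1 x + ((y x0 - p.1 x0) / (u - v).1 x0) * (u - v).1 x := rfl
    rw [h3]
    by_cases hxx : x = x0
    · subst hxx
      rw [div_mul_cancel₀ _ hne]; ring
    · have hxe : x ∈ X.erase x0 := Finset.mem_erase.2 ⟨hxx, hx⟩
      rw [huv x hxe, hpy x hxe, mul_zero, add_zero]

lemma K_unique (s : Multiset ℝ) (X : Finset ℝ) (hX : X.card = Multiset.card s) (f g : W)
    (hf : K s f) (hg : K s g) (h : ∀ x ∈ X, f.1 x = g.1 x) : f = g := by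
  rw [← sub_eq_zero]
  refine K_zeros s _ (K_sub s f g hf hg) X hX.ge fun z hz => ?_
  change f.1 z - g.1 z = 0
  rw [h z hz, sub_self]

lemma mono_all (A : Multiset ℝ) (n : ℕ) (hA : ∀ g ∈ A, 0 < g ∧ g ≤ 1)
    (k : ℕ) (hk : 1 ≤ k) (X : Finset ℝ) (hX : ∀ x ∈ X, 0 ≤ x) (hXc : X.card = Multiset.card A + n)
    (x : ℝ) (hx : x ∈ X) (l l' : W) (hl : K (A + Multiset.replicate n 1) l)
    (hl' : K (Multiset.replicate X.card 1) l')
    (hlx : ∀ y ∈ X, l.1 y = if y = x then 1 else 0)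
    (hlx' : ∀ y ∈ X, l'.1 y = if y = x then 1 else 0) :
    |((DD ^ k) l).1 0| ≤ |((DD ^ k) l').1 0| := by
  induction A using Multiset.induction_on generalizing n l with
  | empty =>
    have : n = X.card := by simp [hXc]
    rw [zero_add, this] at hl
    rw [K_unique _ X (by simp) l l' hl hl' (fun y hy => by rw [hlx y hy, hlx' y hy])]
  | cons a A ih =>
    rw [Multiset.card_cons] at hXc
    have e1 : A + Multiset.replicate (n + 1) 1 = 1 ::ₘ (A + Multiset.replicate n 1) := by
      rw [Multiset.replicate_succ, Multiset.add_cons]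
    obtain ⟨m, hm, hmy⟩ := interp (A + Multiset.replicate (n + 1) 1) X
      (by rw [Multiset.card_add, Multiset.card_replicate]; omega) (fun y => if y = x then 1 else 0)
    have ih' := ih (n + 1) (fun g hg => hA g (Multiset.mem_cons_of_mem hg)) (by omega) m hm hmy
    refine le_trans ?_ ih'
    rw [Multiset.cons_add] at hl
    rw [e1] at hm
    have ha := hA a (Multiset.mem_cons_self a A)
    rcases ha.2.eq_or_lt with h1 | h1
    · rw [h1] at hl
      rw [K_unique _ X (by simp; omega) l m hl hm (fun y hy => by rw [hlx y hy, hmy y hy])]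
    · refine mono_one (A + Multiset.replicate n 1) ?_ a 1 ha.1 h1 k hk X hX ?_ x hx l m hl hm hlx hmy
      · intro g hg
        rcases Multiset.mem_add.1 hg with hg | hg
        · exact (hA g (Multiset.mem_cons_of_mem hg)).1
        · rw [Multiset.eq_of_mem_replicate hg]; exact one_pos
      · rw [Multiset.card_add, Multiset.card_replicate]; omega

/-- Translation. -/
noncomputable def tr (a : ℝ) (f : W) : W :=
  ⟨fun t => f.1 (t + a), (W.cd f).comp (contDiff_id.add contDiff_const)⟩

lemma tr_apply (a : ℝ) (f : W) (t : ℝ) : (tr a f).1 t = f.1 (t + a) := rfl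

lemma DD_tr (a : ℝ) (f : W) : DD (tr a f) = tr a (DD f) := by
  ext t
  change deriv (fun t => f.1 (t + a)) t = deriv f.1 (t + a)
  rw [deriv_comp_add_const]

lemma DDpow_tr (a : ℝ) (k : ℕ) (f : W) : (DD ^ k) (tr a f) = tr a ((DD ^ k) f) := by
  induction k generalizing f with
  | zero => simp
  | succ n ih => rw [pow_succ, Module.End.mul_apply, DD_tr, ih, Module.End.mul_apply]

lemma L_tr (a g : ℝ) (f : W) : L g (tr a f) = tr a (L g f) := by
  rw [L, DD_tr]; rfl

lemma K_tr (s : Multiset ℝ) (a : ℝ) (f : W) (hf : K s f) : K s (tr a f) := by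
  induction s using Multiset.induction_on generalizing f with
  | empty => rw [K_nil] at *; rw [hf]; rfl
  | cons g s ih =>
    rw [K_cons] at *
    rw [L_tr]; exact ih _ hf

lemma supAbs_le_of (s : Multiset ℝ) (hs : ∀ g ∈ s, 0 < g) (f : W) (hf : K s f) (t : ℝ)
    (ht : 0 ≤ t) : |f.1 t| ≤ supAbs f.1 :=
  le_csSup (K_bdd s hs f hf) ⟨t, ht, rfl⟩

lemma supAbs_tr (s : Multiset ℝ) (hs : ∀ g ∈ s, 0 < g) (f : W) (hf : K s f) (a : ℝ)
    (ha : 0 ≤ a) : supAbs (tr a f).1 ≤ supAbs f.1 := by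
  refine csSup_le ⟨_, 0, Set.mem_Ici.2 le_rfl, rfl⟩ ?_
  rintro _ ⟨t, ht, rfl⟩
  exact supAbs_le_of s hs f hf (t + a) (add_nonneg ht ha)

lemma supAbs_nonneg (f : ℝ → ℝ) : 0 ≤ supAbs f := by
  refine Real.sSup_nonneg ?_
  rintro _ ⟨t, _, rfl⟩
  exact abs_nonneg _

/-- Lagrange expansion -/
lemma lagrange (s : Multiset ℝ) (X : Finset ℝ) (hX : X.card = Multiset.card s) (l : ℝ → W)
    (hl : ∀ x ∈ X, K s (l x)) (hlx : ∀ x ∈ X, ∀ y ∈ X, (l x).1 y = if y = x then 1 else 0)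
    (f : W) (hf : K s f) : f = ∑ x ∈ X, f.1 x • l x := by
  refine K_unique s X hX _ _ hf (K_sum s X _ l hl) fun y hy => ?_
  have : (∑ x ∈ X, f.1 x • l x).1 y = ∑ x ∈ X, f.1 x * (l x).1 y := by
    rw [AddSubmonoidClass.coe_finsetSum]
    simp
  rw [this, Finset.sum_eq_single y]
  · rw [hlx y hy y hy]; simp
  · intro x hx hxy
    rw [hlx x hx y hy, if_neg hxy.symm, mul_zero]
  · intro h; exact absurd hy h

lemma weights_bound (s : Multiset ℝ) (hs : ∀ g ∈ s, 0 < g) (X : Finset ℝ)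
    (hX : X.card = Multiset.card s) (hX0 : ∀ x ∈ X, 0 ≤ x) (l : ℝ → W)
    (hl : ∀ x ∈ X, K s (l x)) (hlx : ∀ x ∈ X, ∀ y ∈ X, (l x).1 y = if y = x then 1 else 0)
    (k : ℕ) (f : W) (hf : K s f) (t : ℝ) (ht : 0 ≤ t) :
    |((DD ^ k) f).1 t| ≤ (∑ x ∈ X, |((DD ^ k) (l x)).1 0|) * supAbs f.1 := by
  have h1 := lagrange s X hX l hl hlx (tr t f) (K_tr s t f hf)
  have h2 : ((DD ^ k) f).1 t = ∑ x ∈ X, (tr t f).1 x * ((DD ^ k) (l x)).1 0 := by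
    have : ((DD ^ k) f).1 t = ((DD ^ k) (tr t f)).1 0 := by
      rw [DDpow_tr, tr_apply, zero_add]
    rw [this]
    conv_lhs => rw [h1]
    rw [map_sum, AddSubmonoidClass.coe_finsetSum]
    simp
  rw [h2, Finset.sum_mul]
  refine (Finset.abs_sum_le_sum_abs _ _).trans (Finset.sum_le_sum fun x hx => ?_)
  rw [abs_mul, mul_comm]
  refine mul_le_mul_of_nonneg_left ?_ (abs_nonneg _)
  exact supAbs_le_of s hs f hf _ (add_nonneg (hX0 x hx) ht)

lemma PP_rep (d : ℕ) : PP (Multiset.replicate d 1) = (X + C 1) ^ d := by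
  simp [PP]

lemma K_ew1 (d : ℕ) (q : ℝ[X]) (hq : q.natDegree < d) : K (Multiset.replicate d 1) (ew 1 q) :=
  K_ew _ 1 d q hq (by rw [PP_rep])

lemma rep_pos (d : ℕ) : ∀ g ∈ Multiset.replicate d (1 : ℝ), 0 < g := fun g hg => by
  rw [Multiset.eq_of_mem_replicate hg]; exact one_pos

lemma ew1_fun (q : ℝ[X]) : (fun t => Real.exp (-t) * q.eval t) = (ew 1 q).1 := by
  funext t; rw [ew_apply]; simp

lemma crude (k d : ℕ) : ∃ B : ℝ, 0 ≤ B ∧ ∀ f : W, K (Multiset.replicate d 1) f → ∀ t, 0 ≤ t →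
    |((DD ^ k) f).1 t| ≤ B * supAbs f.1 := by
  set X : Finset ℝ := (Finset.range d).image (fun n : ℕ => (n : ℝ)) with hX
  have hXc : X.card = Multiset.card (Multiset.replicate d (1 : ℝ)) := by
    rw [hX, Finset.card_image_of_injective _ Nat.cast_injective]; simp
  choose l hl hlx using fun x : ℝ => interp (Multiset.replicate d 1) X hXc
    (fun y => if y = x then 1 else 0)
  refine ⟨∑ x ∈ X, |((DD ^ k) (l x)).1 0|, Finset.sum_nonneg fun _ _ => abs_nonneg _,
    fun f hf t ht => ?_⟩
  refine weights_bound _ (rep_pos d) X hXc ?_ l (fun x _ => hl x) (fun x _ => hlx x) k f hf t ht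
  intro x hx
  obtain ⟨n, _, rfl⟩ := Finset.mem_image.1 hx
  positivity

lemma Mkd_nonneg (k d : ℕ) : 0 ≤ Mkd k d := by
  refine Real.sSup_nonneg ?_
  rintro _ ⟨q, _, _, rfl⟩
  exact supAbs_nonneg _

lemma supAbs_le {f : ℝ → ℝ} {B : ℝ} (h : ∀ t, 0 ≤ t → |f t| ≤ B) : supAbs f ≤ B := by
  refine csSup_le ⟨_, 0, Set.mem_Ici.2 le_rfl, rfl⟩ ?_
  rintro _ ⟨t, ht, rfl⟩
  exact h t ht

lemma ew_smul (g c : ℝ) (q : ℝ[X]) : ew g (C c * q) = c • ew g q := by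
  ext t
  change (ew g (C c * q)).1 t = c * (ew g q).1 t
  rw [ew_apply, ew_apply, eval_mul, eval_C]; ring

lemma Mkd_bound (k d : ℕ) (hd : 1 ≤ d) (q : ℝ[X]) (hq : q.natDegree < d) :
    |((DD ^ k) (ew 1 q)).1 0| ≤ Mkd k d * supAbs (ew 1 q).1 := by
  obtain ⟨B, hB, hb⟩ := crude k d
  have hbdd : BddAbove {M : ℝ | ∃ q : Polynomial ℝ, q.natDegree ≤ d - 1 ∧
      supAbs (fun t => Real.exp (-t) * q.eval t) ≤ 1 ∧
      M = supAbs (iteratedDeriv k (fun t => Real.exp (-t) * q.eval t))} := by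
    refine ⟨B, ?_⟩
    rintro _ ⟨q, hq, hq1, rfl⟩
    rw [ew1_fun] at hq1 ⊢
    rw [iterD]
    refine supAbs_le fun t ht => (hb _ (K_ew1 d q (by omega)) t ht).trans ?_
    exact mul_le_of_le_one_right hB hq1
  rcases (supAbs_nonneg (ew 1 q).1).eq_or_lt with h0 | h0
  · have := hb _ (K_ew1 d q hq) 0 le_rfl
    rw [← h0] at this ⊢
    simpa using this
  set N := supAbs (ew 1 q).1 with hN
  have hdeg : (C N⁻¹ * q).natDegree < d := lt_of_le_of_lt (natDegree_C_mul_le _ _) hq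
  have h1 : supAbs (ew 1 (C N⁻¹ * q)).1 ≤ 1 := by
    refine supAbs_le fun t ht => ?_
    have : (ew 1 (C N⁻¹ * q)).1 t = N⁻¹ * (ew 1 q).1 t := by rw [ew_smul]; rfl
    rw [this, abs_mul, abs_of_pos (inv_pos.2 h0), inv_mul_le_iff₀ h0, mul_one]
    exact supAbs_le_of _ (rep_pos d) _ (K_ew1 d q hq) t ht
  have h2 : supAbs ((DD ^ k) (ew 1 (C N⁻¹ * q))).1 ≤ Mkd k d := by
    refine le_csSup hbdd ⟨C N⁻¹ * q, by omega, ?_, ?_⟩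
    · rw [ew1_fun]; exact h1
    · rw [ew1_fun, iterD]
  have h3 := (supAbs_le_of _ (rep_pos d) _ (K_DDpow _ k _ (K_ew1 d _ hdeg)) 0 le_rfl).trans h2
  have : ((DD ^ k) (ew 1 (C N⁻¹ * q))).1 0 = N⁻¹ * ((DD ^ k) (ew 1 q)).1 0 := by
    rw [ew_smul, map_smul]; rfl
  rw [this, abs_mul, abs_of_pos (inv_pos.2 h0), inv_mul_le_iff₀ h0, mul_comm] at h3
  exact h3

/-- Reduction of the support of a linear combination, not increasing the `ℓ¹` norm. -/
lemma reduce {E ι : Type*} [AddCommGroup E] [Module ℝ E] [DecidableEq ι] (v : ι → E) (n : ℕ) :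
    ∀ (S : Finset ι) (c : ι → ℝ), S.card = n → ∃ (S' : Finset ι) (c' : ι → ℝ),
      LinearIndepOn ℝ v (S' : Set ι) ∧ ∑ i ∈ S', c' i • v i = ∑ i ∈ S, c i • v i ∧
      ∑ i ∈ S', |c' i| ≤ ∑ i ∈ S, |c i| := by
  induction n with
  | zero =>
    intro S c hS
    rw [Finset.card_eq_zero] at hS
    subst hS
    exact ⟨∅, c, by simp, rfl, le_rfl⟩
  | succ n ih =>
    intro S c hS
    -- it suffices to find an equivalent `c'` with a zero in `S`
    have key : ∀ c' : ι → ℝ, (∃ j ∈ S, c' j = 0) → ∑ i ∈ S, c' i • v i = ∑ i ∈ S, c i • v i →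
        ∑ i ∈ S, |c' i| ≤ ∑ i ∈ S, |c i| → ∃ (S' : Finset ι) (c' : ι → ℝ),
      LinearIndepOn ℝ v (S' : Set ι) ∧ ∑ i ∈ S', c' i • v i = ∑ i ∈ S, c i • v i ∧
      ∑ i ∈ S', |c' i| ≤ ∑ i ∈ S, |c i| := by
      rintro c' ⟨j, hj, hj0⟩ h1 h2
      obtain ⟨S', c'', h3, h4, h5⟩ := ih (S.erase j) c' (by rw [Finset.card_erase_of_mem hj]; omega)
      refine ⟨S', c'', h3, ?_, ?_⟩
      · rw [h4, ← h1, ← Finset.add_sum_erase S _ hj, hj0]; simp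
      · refine h5.trans (le_trans ?_ h2)
        rw [← Finset.add_sum_erase S _ hj, hj0]; simp
    by_cases hli : LinearIndepOn ℝ v (S : Set ι)
    · exact ⟨S, c, hli, rfl, le_rfl⟩
    by_cases hz : ∃ j ∈ S, c j = 0
    · exact key c hz rfl le_rfl
    push Not at hz
    rw [linearIndepOn_finset_iff] at hli
    push Not at hli
    obtain ⟨b, hb, i0, hi0, hbi0⟩ := hli
    -- choose the sign of b
    obtain ⟨b, hb, hbne, hsum⟩ : ∃ b : ι → ℝ, ∑ i ∈ S, b i • v i = 0 ∧ (∃ i ∈ S, b i ≠ 0) ∧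
        0 ≤ ∑ i ∈ S, b i * SignType.sign (c i) := by
      rcases le_total 0 (∑ i ∈ S, b i * SignType.sign (c i)) with h | h
      · exact ⟨b, hb, ⟨i0, hi0, hbi0⟩, h⟩
      · refine ⟨-b, ?_, ⟨i0, hi0, by simpa using hbi0⟩, ?_⟩
        · simp [hb]
        · simpa using h
    set P := S.filter (fun i => 0 < b i * SignType.sign (c i)) with hP
    have hsg : ∀ i ∈ S, ((SignType.sign (c i) : SignType) : ℝ) ≠ 0 := fun i hi => by
      have := hz i hi
      rcases lt_or_gt_of_ne this with h | h
      · rw [sign_neg h]; simp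
      · rw [sign_pos h]; simp
    have hPne : P.Nonempty := by
      by_contra hemp
      rw [Finset.not_nonempty_iff_eq_empty, hP, Finset.filter_eq_empty_iff] at hemp
      push Not at hemp
      obtain ⟨i, hi, hbi⟩ := hbne
      have h0 : ∑ i ∈ S, b i * SignType.sign (c i) = 0 :=
        le_antisymm (Finset.sum_nonpos fun i hi => hemp hi) hsum
      have := (Finset.sum_eq_zero_iff_of_nonpos (fun i hi => hemp hi)).1 h0 i hi
      rcases mul_eq_zero.1 this with h | h
      · exact hbi h
      · exact hsg i hi h
    obtain ⟨j, hj, hjmin⟩ := Finset.exists_min_image P (fun i => |c i| / |b i|) hPne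
    have hjS : j ∈ S := (Finset.mem_filter.1 hj).1
    have hjpos := (Finset.mem_filter.1 hj).2
    have hbj : b j ≠ 0 := fun h => by simp [h] at hjpos
    have hcs : ∀ i ∈ S, |c i| = c i * SignType.sign (c i) := fun i hi => by
      rcases lt_or_gt_of_ne (hz i hi) with h | h
      · rw [sign_neg h, abs_of_neg h]; simp
      · rw [sign_pos h, abs_of_pos h]; simp
    have hss : ∀ i ∈ S, |((SignType.sign (c i) : SignType) : ℝ)| = 1 := fun i hi => by
      rcases lt_or_gt_of_ne (hz i hi) with h | h
      · rw [sign_neg h]; simp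
      · rw [sign_pos h]; simp
    have hbs : ∀ i ∈ S, b i * SignType.sign (c i) ≤ |b i| := fun i hi => by
      refine (le_abs_self _).trans ?_
      rw [abs_mul, hss i hi, mul_one]
    have hbs' : ∀ i ∈ P, b i * SignType.sign (c i) = |b i| := fun i hi => by
      have := Finset.mem_filter.1 hi
      rw [← abs_of_pos this.2, abs_mul, hss i this.1, mul_one]
    set τ := |c j| / |b j| with hτ
    have hτ0 : 0 ≤ τ := by positivity
    refine key (fun i => c i - τ * b i) ⟨j, hjS, ?_⟩ ?_ ?_
    · have h1 := hbs' j hj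
      have h2 := hcs j hjS
      have h3 := hsg j hjS
      rw [hτ, h2, ← h1]
      field_simp
      simp
    · simp only [sub_smul, Finset.sum_sub_distrib, mul_smul]
      rw [← Finset.smul_sum, hb]; simp
    · have : ∀ i ∈ S, |c i - τ * b i| = |c i| - τ * (b i * SignType.sign (c i)) := by
        intro i hi
        have h1 : |c i| - τ * (b i * SignType.sign (c i))
            = (c i - τ * b i) * SignType.sign (c i) := by rw [hcs i hi]; ring
        have h2 : 0 ≤ |c i| - τ * (b i * SignType.sign (c i)) := by
          by_cases hiP : i ∈ P
          · rw [hbs' i hiP]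
            have hbi : 0 < |b i| := by
              rw [← hbs' i hiP]; exact (Finset.mem_filter.1 hiP).2
            have := hjmin i hiP
            rw [le_div_iff₀ hbi] at this
            linarith
          · have : b i * SignType.sign (c i) ≤ 0 := by
              by_contra hcon
              push Not at hcon
              exact hiP (Finset.mem_filter.2 ⟨hi, hcon⟩)
            have := mul_nonpos_of_nonneg_of_nonpos hτ0 this
            have := abs_nonneg (c i)
            linarith
        rw [← abs_of_nonneg h2, h1, abs_mul, hss i hi, mul_one]
      rw [Finset.sum_congr rfl this, Finset.sum_sub_distrib, ← Finset.mul_sum]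
      have := mul_nonneg hτ0 hsum
      linarith

lemma W_sum_apply {ι : Type*} (S : Finset ι) (c : ι → ℝ) (f : ι → W) (t : ℝ) :
    (∑ i ∈ S, c i • f i).1 t = ∑ i ∈ S, c i * (f i).1 t := by
  rw [AddSubmonoidClass.coe_finsetSum]
  simp

lemma ew_expand (d : ℕ) (q : ℝ[X]) (hq : q.natDegree < d) :
    ew 1 q = ∑ j : Fin d, q.coeff j • ew 1 (X ^ (j : ℕ)) := by
  ext t
  change (ew 1 q).1 t = (∑ j : Fin d, q.coeff j • ew 1 (X ^ (j : ℕ))).1 t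
  rw [W_sum_apply, ew_apply, eval_eq_sum_range' hq, Finset.sum_range, Finset.mul_sum]
  refine Finset.sum_congr rfl fun j _ => ?_
  rw [ew_apply, eval_pow, eval_X]; ring

noncomputable def vv (d : ℕ) (t : ℝ) : Fin d → ℝ := fun j => (ew 1 (X ^ (j : ℕ))).1 t

lemma vv_cont (d : ℕ) : Continuous (vv d) := continuous_pi fun j => W.cont _

lemma vv_tendsto (d : ℕ) : Tendsto (vv d) atTop (𝓝 0) := by
  rw [tendsto_pi_nhds]
  intro j
  exact K_tendsto _ (rep_pos d) _ (K_ew1 d (X ^ (j : ℕ)) (by simp))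

lemma hull_compact (d : ℕ) (U : Set (Fin d → ℝ)) (hU : IsCompact U) (u0 : Fin d → ℝ)
    (hu0 : u0 ∈ U) : IsCompact (convexHull ℝ U) := by
  have h1 : IsCompact (stdSimplex ℝ (Fin (d + 1)) ×ˢ
      (Set.pi Set.univ fun _ : Fin (d + 1) => U)) :=
    (isCompact_stdSimplex ℝ _).prod (isCompact_univ_pi fun _ => hU)
  have hcont : Continuous (fun p : (Fin (d + 1) → ℝ) × (Fin (d + 1) → Fin d → ℝ) =>
      ∑ i, p.1 i • p.2 i) := by fun_prop
  have h2 := h1.image hcont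
  convert h2 using 1
  apply Set.Subset.antisymm
  · intro x hx
    obtain ⟨ι, _, z, w, hz, haff, hw, hw1, hx⟩ := eq_pos_convex_span_of_mem_convexHull hx
    have hcard : Fintype.card ι ≤ Fintype.card (Fin (d + 1)) := by
      have := haff.card_le_finrank_succ
      have h3 := Submodule.finrank_le (vectorSpan ℝ (Set.range z))
      simp only [Module.finrank_fin_fun, Fintype.card_fin] at *
      omega
    obtain ⟨e⟩ := Function.Embedding.nonempty_of_card_le hcard
    have hw' : ∀ j, j ∉ Set.range e → Function.extend e w 0 j = 0 := fun j hj =>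
      Function.extend_apply' _ _ _ (by simpa using hj)
    refine ⟨(Function.extend e w 0, Function.extend e z fun _ => u0), ⟨⟨?_, ?_⟩, ?_⟩, ?_⟩
    · intro j
      by_cases hj : j ∈ Set.range e
      · obtain ⟨i, rfl⟩ := hj
        simp only [e.injective.extend_apply]
        exact (hw i).le
      · exact (hw' j hj).ge
    · rw [← hw1]
      exact (Fintype.sum_of_injective e e.injective w _ hw'
        (fun i => (e.injective.extend_apply w 0 i).symm)).symm
    · intro j _
      by_cases hj : j ∈ Set.range e
      · obtain ⟨i, rfl⟩ := hj
        simp only [e.injective.extend_apply]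
        exact hz ⟨i, rfl⟩
      · simp only
        rw [Function.extend_apply' _ _ _ (by simpa using hj)]
        exact hu0
    · rw [← hx]
      refine (Fintype.sum_of_injective e e.injective (fun i => w i • z i) _ ?_ ?_).symm
      · intro j hj
        simp only
        rw [hw' j hj, zero_smul]
      · intro i
        simp only [e.injective.extend_apply]
  · rintro _ ⟨⟨w, z⟩, ⟨hw, hz⟩, rfl⟩
    exact (convex_convexHull ℝ U).sum_mem (fun i _ => hw.1 i) hw.2
      (fun i _ => subset_convexHull ℝ U (hz i (Set.mem_univ i)))

open scoped Pointwise in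
lemma dual_hull (k d : ℕ) (hd : 1 ≤ d) :
    ∃ (ι : Type) (S : Finset ι) (c : ι → ℝ) (τ : ι → NNReal),
      (fun j : Fin d => ((DD ^ k) (ew 1 (X ^ (j : ℕ)))).1 0) = ∑ i ∈ S, c i • vv d (τ i) ∧
      ∑ i ∈ S, |c i| ≤ Mkd k d := by
  set Lv : Fin d → ℝ := (fun j : Fin d => ((DD ^ k) (ew 1 (X ^ (j : ℕ)))).1 0) with hLv
  set M := Mkd k d with hM
  have hM0 : 0 ≤ M := Mkd_nonneg k d
  set Q : Set (Fin d → ℝ) := insert 0 (Set.range fun t : ℝ => vv d |t|) with hQ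
  have hQc : IsCompact Q := by
    refine Filter.Tendsto.isCompact_insert_range_of_cocompact ?_ ((vv_cont d).comp continuous_abs)
    exact (vv_tendsto d).comp tendsto_norm_cocompact_atTop
  set U := Q ∪ -Q with hU
  have hUc : IsCompact (convexHull ℝ U) := hull_compact d U (hQc.union hQc.neg) 0
    (Or.inl (Set.mem_insert _ _))
  have hmem : Lv ∈ M • convexHull ℝ U := by
    by_contra hcon
    obtain ⟨f, u, h1, h2⟩ := geometric_hahn_banach_closed_point ((convex_convexHull ℝ U).smul M)
      (hUc.smul M).isClosed hcon
    set x : Fin d → ℝ := fun j => f (Pi.single j 1) with hx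
    have hfx : ∀ a : Fin d → ℝ, f a = ∑ j, x j * a j := by
      intro a
      conv_lhs => rw [pi_eq_sum_univ' a]
      rw [map_sum]
      refine Finset.sum_congr rfl fun j _ => ?_
      rw [map_smul, smul_eq_mul, mul_comm]
    set q : ℝ[X] := ∑ j : Fin d, C (x j) * X ^ (j : ℕ) with hq
    have hqd : q.natDegree < d := by
      have : q.natDegree ≤ d - 1 := natDegree_sum_le_of_forall_le _ _ fun j _ =>
        (natDegree_C_mul_X_pow_le _ _).trans (by have := j.2; omega)
      omega
    have hqe : ew 1 q = ∑ j : Fin d, x j • ew 1 (X ^ (j : ℕ)) := by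
      ext t
      change (ew 1 q).1 t = (∑ j : Fin d, x j • ew 1 (X ^ (j : ℕ))).1 t
      rw [W_sum_apply, ew_apply, hq, eval_finsetSum, Finset.mul_sum]
      refine Finset.sum_congr rfl fun j _ => ?_
      rw [ew_apply, eval_mul, eval_pow, eval_X, eval_C]; ring
    have hfv : ∀ t, f (vv d t) = (ew 1 q).1 t := by
      intro t
      rw [hfx, hqe, W_sum_apply]; rfl
    have hfL : f Lv = ((DD ^ k) (ew 1 q)).1 0 := by
      rw [hfx, hqe, map_sum]
      simp only [map_smul]
      rw [W_sum_apply]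
    have hle := (le_abs_self _).trans (Mkd_bound k d hd q hqd)
    rw [← hfL, ← hM] at hle
    have hall : ∀ t, 0 ≤ t → M * |(ew 1 q).1 t| ≤ u := by
      intro t ht
      have hvQ : vv d t ∈ Q := Or.inr ⟨t, by simp [abs_of_nonneg ht]⟩
      have a1 := h1 _ (Set.smul_mem_smul_set (a := M) (subset_convexHull ℝ U (Or.inl hvQ)))
      have a2 := h1 _ (Set.smul_mem_smul_set (a := M) (subset_convexHull ℝ U
        (Or.inr (show -vv d t ∈ -Q by simpa using hvQ))))
      rw [map_smul, smul_eq_mul, hfv] at a1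
      rw [map_smul, smul_eq_mul, map_neg, hfv] at a2
      rcases abs_cases ((ew 1 q).1 t) with h | h <;> rw [h.1] <;> linarith
    have hMu : M * supAbs (ew 1 q).1 ≤ u := by
      rcases hM0.eq_or_lt with h | h
      · rw [← h, zero_mul]
        have := hall 0 le_rfl
        rwa [← h, zero_mul] at this
      · rw [mul_comm, ← le_div_iff₀ h]
        refine supAbs_le fun t ht => ?_
        rw [le_div_iff₀ h, mul_comm]
        exact hall t ht
    linarith
  obtain ⟨y, hy, hyL⟩ := hmem
  rw [convexHull_eq] at hy
  obtain ⟨ι, S, w, z, hw0, hw1, hz, hzy⟩ := hy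
  have hch : ∀ i, ∃ (e : ℝ) (τ : NNReal), i ∈ S → |e| ≤ 1 ∧ z i = e • vv d τ := by
    intro i
    by_cases hi : i ∈ S
    · have : ∀ a ∈ Q, ∃ (e : ℝ) (τ : NNReal), |e| ≤ 1 ∧ a = e • vv d τ := by
        rintro a (rfl | ⟨t, rfl⟩)
        · exact ⟨0, 0, by simp, by simp⟩
        · exact ⟨1, ⟨|t|, abs_nonneg t⟩, by simp, (one_smul ℝ _).symm⟩
      rcases hz i hi with h | h
      · obtain ⟨e, τ, h1, h2⟩ := this _ h
        exact ⟨e, τ, fun _ => ⟨h1, h2⟩⟩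
      · obtain ⟨e, τ, h1, h2⟩ := this _ (Set.mem_neg.1 h)
        exact ⟨-e, τ, fun _ => ⟨by simpa using h1, by rw [neg_smul, ← h2, neg_neg]⟩⟩
    · exact ⟨0, 0, fun h => absurd h hi⟩
  choose e τ he using hch
  refine ⟨ι, S, fun i => M * (w i * e i), τ, ?_, ?_⟩
  · rw [← hyL, ← hzy, Finset.centerMass_eq_of_sum_1 _ _ hw1]
    change M • _ = _
    rw [Finset.smul_sum]
    refine Finset.sum_congr rfl fun i hi => ?_
    rw [(he i hi).2, mul_smul, mul_smul]
  · calc ∑ i ∈ S, |M * (w i * e i)| ≤ ∑ i ∈ S, M * w i := by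
          refine Finset.sum_le_sum fun i hi => ?_
          rw [abs_mul, abs_mul, abs_of_nonneg hM0, abs_of_nonneg (hw0 i hi)]
          exact mul_le_mul_of_nonneg_left (mul_le_of_le_one_right (hw0 i hi) (he i hi).1) hM0
      _ = M := by rw [← Finset.mul_sum, hw1, mul_one]

lemma dual_nodes (k d : ℕ) (hd : 1 ≤ d) :
    ∃ (Y : Finset ℝ) (l : ℝ → W), Y.card = d ∧ (∀ x ∈ Y, 0 ≤ x) ∧
      (∀ x ∈ Y, K (Multiset.replicate d 1) (l x)) ∧
      (∀ x ∈ Y, ∀ y ∈ Y, (l x).1 y = if y = x then 1 else 0) ∧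
      ∑ x ∈ Y, |((DD ^ k) (l x)).1 0| ≤ Mkd k d := by
  classical
  obtain ⟨ι, S0, c0, τ, h0, h0'⟩ := dual_hull k d hd
  obtain ⟨S, c, hli, hsum, hle⟩ := reduce (fun i => vv d (τ i)) _ S0 c0 rfl
  have hScard : S.card ≤ d := by
    have h1 : LinearIndependent ℝ (fun i : S => vv d (τ i)) := hli
    have := h1.fintype_card_le_finrank
    simpa using this
  obtain ⟨Y0, hY0, hY0c⟩ := Infinite.exists_superset_card_eq (S.image τ) d
    (Finset.card_image_le.trans hScard)
  set Y : Finset ℝ := Y0.image (fun x : NNReal => (x : ℝ)) with hY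
  have hYc : Y.card = d := by
    rw [hY, Finset.card_image_of_injective _ NNReal.coe_injective, hY0c]
  have hτY : ∀ i ∈ S, (τ i : ℝ) ∈ Y := fun i hi =>
    Finset.mem_image_of_mem _ (hY0 (Finset.mem_image_of_mem _ hi))
  set Lq : ℝ → ℝ[X] := fun x =>
    Lagrange.interpolate Y id (fun y => Real.exp y * if y = x then 1 else 0) with hLq
  have hdeg : ∀ x, (Lq x).natDegree < d := by
    intro x
    have h1 : (Lq x).degree < Y.card := Lagrange.degree_interpolate_lt _ (Set.injOn_id _)
    rw [hYc] at h1
    by_cases hz : Lq x = 0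
    · rw [hz, natDegree_zero]; omega
    · exact (natDegree_lt_iff_degree_lt hz).2 h1
  have hdel : ∀ x, ∀ y ∈ Y, (ew 1 (Lq x)).1 y = if y = x then 1 else 0 := by
    intro x y hy
    rw [ew_apply]
    have : (Lq x).eval y = Real.exp y * if y = x then 1 else 0 :=
      Lagrange.eval_interpolate_at_node (v := id) _ (Set.injOn_id _) hy
    rw [this, ← mul_assoc, ← Real.exp_add]; simp
  refine ⟨Y, fun x => ew 1 (Lq x), hYc, ?_, fun x _ => K_ew1 d _ (hdeg x), fun x _ => hdel x, ?_⟩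
  · intro x hx
    obtain ⟨y, _, rfl⟩ := Finset.mem_image.1 hx
    exact y.2
  have hfun : ∀ x, ((DD ^ k) (ew 1 (Lq x))).1 0 = ∑ i ∈ S, c i * (ew 1 (Lq x)).1 (τ i) := by
    intro x
    have hj : ∀ j : Fin d, ((DD ^ k) (ew 1 (X ^ (j : ℕ)))).1 0
        = ∑ i ∈ S, c i * (ew 1 (X ^ (j : ℕ))).1 (τ i) := by
      intro j
      have := congrFun (h0.trans hsum.symm) j
      simpa [vv] using this
    rw [ew_expand d _ (hdeg x), map_sum]
    simp only [map_smul]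
    rw [W_sum_apply]
    simp only [W_sum_apply, hj, Finset.mul_sum]
    rw [Finset.sum_comm]
    refine Finset.sum_congr rfl fun i _ => Finset.sum_congr rfl fun j _ => ?_
    ring
  calc ∑ x ∈ Y, |((DD ^ k) (ew 1 (Lq x))).1 0|
      ≤ ∑ x ∈ Y, ∑ i ∈ S, |c i| * (if (τ i : ℝ) = x then 1 else 0) := by
        refine Finset.sum_le_sum fun x _ => ?_
        rw [hfun]
        refine (Finset.abs_sum_le_sum_abs _ _).trans (Finset.sum_le_sum fun i hi => ?_)
        rw [hdel x _ (hτY i hi), abs_mul]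
        split_ifs <;> simp
    _ = ∑ i ∈ S, |c i| := by
        rw [Finset.sum_comm]
        refine Finset.sum_congr rfl fun i hi => ?_
        rw [← Finset.mul_sum, Finset.sum_ite_eq, if_pos (hτY i hi), mul_one]
    _ ≤ Mkd k d := hle.trans h0'

lemma expPoly_K (d : ℕ) (h : Fin d → ℝ) (p : ℝ → ℝ) (hp : p ∈ expPoly d h) :
    ∃ f : W, f.1 = p ∧ K (Finset.univ.val.map h) f := by
  classical
  obtain ⟨c, hc⟩ := hp
  refine ⟨∑ i : Fin d, c i • ew (h i) (X ^ (Nat.card {j : Fin d // j < i ∧ h j = h i})), ?_, ?_⟩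
  · funext t
    rw [W_sum_apply, hc]
    refine Finset.sum_congr rfl fun i _ => ?_
    rw [ew_apply, eval_pow, eval_X]; ring
  · refine K_sum _ _ _ _ fun i _ => ?_
    refine K_ew _ (h i) (Nat.card {j : Fin d // j < i ∧ h j = h i} + 1) _ (by simp) ?_
    have h1 : PP (Finset.univ.val.map h) = ∏ j : Fin d, (X + C (h j)) := by
      rw [PP, Multiset.map_map]; rfl
    have h2 : Nat.card {j : Fin d // j < i ∧ h j = h i} + 1
        = (insert i (Finset.univ.filter fun j : Fin d => j < i ∧ h j = h i)).card := by
      rw [Finset.card_insert_of_notMem (by simp), Nat.card_eq_fintype_card, Fintype.card_subtype]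
    have h3 : (X + C (h i)) ^ (Nat.card {j : Fin d // j < i ∧ h j = h i} + 1)
        = ∏ j ∈ insert i (Finset.univ.filter fun j : Fin d => j < i ∧ h j = h i),
          (X + C (h j)) := by
      rw [h2, ← Finset.prod_const]
      refine Finset.prod_congr rfl fun j hj => ?_
      rcases Finset.mem_insert.1 hj with rfl | hj
      · rfl
      · rw [(Finset.mem_filter.1 hj).2.2]
    rw [h1, h3]
    exact Finset.prod_dvd_prod_of_subset _ _ _ (Finset.subset_univ _)

end MB

/-- Uniform Markov–Bernstein inequality for exponential polynomials:
for `0 < h₁ ≤ ⋯ ≤ h_d ≤ 1` and `p ∈ P_h`,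
`sup_{t ≥ 0} |p⁽ᵏ⁾(t)| ≤ M_{k,d} · sup_{t ≥ 0} |p(t)|`. -/
theorem markov_bernstein_uniform (d k : ℕ) (hd : 1 ≤ d) (hk : 1 ≤ k)
    (h : Fin d → ℝ) (hmono : Monotone h) (hpos : ∀ i, 0 < h i) (hone : ∀ i, h i ≤ 1)
    (p : ℝ → ℝ) (hp : p ∈ expPoly d h) :
    ∀ t : ℝ, 0 ≤ t → |iteratedDeriv k p t| ≤ Mkd k d * supAbs p := by
  intro t ht
  obtain ⟨f, rfl, hf⟩ := MB.expPoly_K d h p hp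
  rw [MB.iterD]
  obtain ⟨Y, l', hYc, hY0, hl', hlx', hM⟩ := MB.dual_nodes k d hd
  have hcard : Multiset.card (Finset.univ.val.map h) = d := by simp
  have hA : ∀ g ∈ Finset.univ.val.map h, 0 < g ∧ g ≤ 1 := by
    intro g hg
    obtain ⟨i, _, rfl⟩ := Multiset.mem_map.1 hg
    exact ⟨hpos i, hone i⟩
  choose l hl hlx using fun x : ℝ => MB.interp (Finset.univ.val.map h) Y (by rw [hYc, hcard])
    (fun y => if y = x then 1 else 0)
  have h1 := MB.weights_bound _ (fun g hg => (hA g hg).1) Y (by rw [hYc, hcard]) hY0 l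
    (fun x _ => hl x) (fun x _ => hlx x) k f hf t ht
  refine h1.trans (mul_le_mul_of_nonneg_right (le_trans ?_ hM) (MB.supAbs_nonneg _))
  refine Finset.sum_le_sum fun x hx => ?_
  refine MB.mono_all (Finset.univ.val.map h) 0 hA k hk Y hY0 (by rw [hYc, hcard]; rfl) x hx
    (l x) (l' x) ?_ ?_ (hlx x) (hlx' x hx)
  · rw [Multiset.replicate_zero, add_zero]; exact hl x
  · rw [hYc]; exact hl' x hx
end

section
/- Let d ≥ 1 and k ≥ 1 be integers, let h = (h₁,…,h_d) satisfy 0 < h₁ ≤ ⋯ ≤ h_d ≤ 1, and let p ∈ P_h. Then sup_{t ≥ 0} |p⁽ᵏ⁾(t)| ≤ ( Σ_{j=0}^{k} 8ʲ · C(d−1, j) · C(k, j) / C(2j, j) ) · sup_{t ≥ 0} |p(t)|, where C(n, r) denotes the binomial coefficient (so terms with j > d−1 vanish because C(d−1, j) = 0). -/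
open scoped ContDiff Topology
open Filter


namespace MB

/-- smooth functions on the line -/
def Sm (p : ℝ → ℝ) : Prop := ContDiff ℝ ∞ p

/-- product of operators D + h -/
noncomputable def Lop : List ℝ → (ℝ → ℝ) → (ℝ → ℝ)
  | [], p => p
  | h :: l, p => Lop l (fun t => deriv p t + h * p t)

theorem Sm.diff {p : ℝ → ℝ} (hp : Sm p) : Differentiable ℝ p :=
  ContDiff.differentiable hp (by simp)

theorem Sm.deriv {p : ℝ → ℝ} (hp : Sm p) : Sm (deriv p) :=
  (contDiff_infty_iff_deriv.1 hp).2

theorem Sm.lin {p q : ℝ → ℝ} (hp : Sm p) (hq : Sm q) (a b : ℝ) :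
    Sm (fun t => a * p t + b * q t) := by
  unfold Sm at *
  fun_prop

theorem Sm.step {p : ℝ → ℝ} (hp : Sm p) (h : ℝ) : Sm (fun t => _root_.deriv p t + h * p t) := by
  have := hp.deriv.lin hp 1 h
  simpa using this

theorem Sm.neg {p : ℝ → ℝ} (hp : Sm p) : Sm (fun t => - p t) := by
  unfold Sm at *
  fun_prop

theorem Sm.iter {p : ℝ → ℝ} (hp : Sm p) (k : ℕ) : Sm (_root_.deriv^[k] p) := by
  induction k generalizing p with
  | zero => exact hp
  | succ k ih => exact ih hp.deriv

theorem Lop_smooth (l : List ℝ) {p : ℝ → ℝ} (hp : Sm p) : Sm (Lop l p) := by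
  induction l generalizing p with
  | nil => exact hp
  | cons h l ih => exact ih (hp.step h)

theorem deriv_lin {p q : ℝ → ℝ} (hp : Sm p) (hq : Sm q) (a b : ℝ) :
    deriv (fun t => a * p t + b * q t) = fun t => a * deriv p t + b * deriv q t := by
  funext t
  exact ((hp.diff t).hasDerivAt.const_mul a |>.add ((hq.diff t).hasDerivAt.const_mul b)).deriv

theorem Lop_lin (l : List ℝ) {p q : ℝ → ℝ} (hp : Sm p) (hq : Sm q) (a b : ℝ) :
    Lop l (fun t => a * p t + b * q t) = fun t => a * Lop l p t + b * Lop l q t := by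
  induction l generalizing p q with
  | nil => rfl
  | cons h l ih =>
    simp only [Lop]
    rw [← ih (hp.step h) (hq.step h), deriv_lin hp hq]
    congr 1
    funext t
    ring

theorem Lop_neg (l : List ℝ) {p : ℝ → ℝ} (hp : Sm p) :
    Lop l (fun t => - p t) = fun t => - Lop l p t := by
  have := Lop_lin l hp hp (-1) 0
  simpa using this

theorem Lop_deriv (l : List ℝ) {p : ℝ → ℝ} (hp : Sm p) : Lop l (deriv p) = deriv (Lop l p) := by
  induction l generalizing p with
  | nil => rfl
  | cons h l ih =>
    simp only [Lop]
    rw [← ih (hp.step h)]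
    have := deriv_lin hp.deriv hp 1 h
    simp only [one_mul] at this
    rw [this]

theorem Lop_iter (l : List ℝ) {p : ℝ → ℝ} (hp : Sm p) (k : ℕ) :
    Lop l (deriv^[k] p) = deriv^[k] (Lop l p) := by
  induction k generalizing p with
  | zero => rfl
  | succ k ih => simp only [Function.iterate_succ, Function.comp]; rw [ih hp.deriv, Lop_deriv l hp]

theorem Lop_append (l : List ℝ) (b : ℝ) (p : ℝ → ℝ) :
    Lop (l ++ [b]) p = fun t => deriv (Lop l p) t + b * Lop l p t := by
  induction l generalizing p with
  | nil => rfl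
  | cons h l ih => simp only [List.cons_append, Lop]; rw [ih]

theorem Lop_shift (l : List ℝ) (a : ℝ) (p : ℝ → ℝ) :
    Lop l (fun t => p (t + a)) = fun t => Lop l p (t + a) := by
  induction l generalizing p with
  | nil => rfl
  | cons h l ih =>
    simp only [Lop]; rw [← ih]; congr 1; funext t
    rw [deriv_comp_add_const]

theorem hasDerivAt_expmul {p : ℝ → ℝ} (hp : Sm p) (w t : ℝ) :
    HasDerivAt (fun t => Real.exp (w * t) * p t) (Real.exp (w * t) * (deriv p t + w * p t)) t := by
  have h1 : HasDerivAt (fun t => Real.exp (w * t)) (Real.exp (w * t) * (w * 1)) t :=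
    ((hasDerivAt_id t).const_mul w).exp
  exact (h1.mul (hp.diff t).hasDerivAt).congr_deriv (by ring)

theorem mvt {p : ℝ → ℝ} (hp : Sm p) (w : ℝ) {a b : ℝ} (hab : a < b) :
    ∃ c, a < c ∧ c < b ∧ Real.exp (w * c) * (deriv p c + w * p c) * (b - a)
      = Real.exp (w * b) * p b - Real.exp (w * a) * p a := by
  obtain ⟨c, hc, h⟩ := exists_hasDerivAt_eq_slope (fun t => Real.exp (w * t) * p t)
    (fun t => Real.exp (w * t) * (deriv p t + w * p t)) hab
    (fun x _ => (hasDerivAt_expmul hp w x).continuousAt.continuousWithinAt)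
    (fun x _ => hasDerivAt_expmul hp w x)
  refine ⟨c, hc.1, hc.2, ?_⟩
  have : b - a ≠ 0 := by linarith
  field_simp at h
  linarith

/-- increasing up to N -/
def Inc (N : ℕ) (z : ℕ → ℝ) : Prop := ∀ i, i + 1 < N → z i < z (i + 1)

theorem Inc.zero_le {N : ℕ} {z : ℕ → ℝ} (h : Inc N z) {i : ℕ} (hi : i < N) : z 0 ≤ z i := by
  induction i with
  | zero => exact le_rfl
  | succ i ih => exact (ih (by omega)).trans (h i hi).le

theorem signs (l : List ℝ) {p : ℝ → ℝ} (hp : Sm p) (z : ℕ → ℝ) (x0 : ℝ)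
    (hz : Inc l.length z) (h0 : ∀ i < l.length, p (z i) = 0) (hx : ∀ i < l.length, x0 ≤ z i)
    (hL : ∀ t, 0 ≤ (-1) ^ l.length * Lop l p t) : 0 ≤ p x0 := by
  induction l generalizing p z x0 with
  | nil => simpa [Lop] using hL x0
  | cons w l ih =>
    simp only [List.length_cons] at *
    have hy : ∀ i, ∃ y, i < l.length → z i < y ∧ y < z (i+1) ∧ deriv p y + w * p y = 0 := by
      intro i
      by_cases hi : i < l.length
      · obtain ⟨c, h1, h2, h3⟩ := mvt hp w (hz i (by omega))
        refine ⟨c, fun _ => ⟨h1, h2, ?_⟩⟩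
        rw [h0 i (by omega), h0 (i+1) (by omega)] at h3
        have h4 := Real.exp_pos (w * c)
        have h5 : z (i+1) - z i ≠ 0 := by linarith
        simp at h3
        rcases h3 with h3 | h3
        · exact h3
        · exact absurd h3 h5
      · exact ⟨0, fun h => absurd h hi⟩
    choose y hy using hy
    have key : ∀ x ≤ z 0, deriv p x + w * p x ≤ 0 := by
      intro x hxz
      have := ih (hp.step w).neg y x (fun i hi => ?_) (fun i hi => ?_) (fun i hi => ?_) (fun t => ?_)
      · linarith
      · exact ((hy i (by omega)).2.1).trans (hy (i+1) hi).1
      · simp [(hy i hi).2.2]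
      · exact hxz.trans ((hz.zero_le (by omega)).trans (hy i hi).1.le)
      · rw [Lop_neg l (hp.step w)]
        have := hL t
        simp only [Lop] at this
        rw [pow_succ] at this
        linarith
    have hanti : AntitoneOn (fun t => Real.exp (w * t) * p t) (Set.Iic (z 0)) := by
      apply antitoneOn_of_deriv_nonpos (convex_Iic _)
      · exact fun x _ => (hasDerivAt_expmul hp w x).continuousAt.continuousWithinAt
      · exact fun x _ => (hasDerivAt_expmul hp w x).differentiableAt.differentiableWithinAt
      · intro x hx
        rw [(hasDerivAt_expmul hp w x).deriv]
        simp only [interior_Iic, Set.mem_Iio] at hx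
        exact mul_nonpos_of_nonneg_of_nonpos (Real.exp_pos _).le (key x hx.le)
    have h1 := hanti (hx 0 (by omega)) (le_refl (z 0)) (hx 0 (by omega))
    simp only [h0 0 (by omega), mul_zero] at h1
    exact nonneg_of_mul_nonneg_right h1 (Real.exp_pos _)

theorem alt (l : List ℝ) {p : ℝ → ℝ} (hp : Sm p) (z : ℕ → ℝ)
    (hz : Inc (l.length + 1) z) (h0 : ∀ i < l.length + 1, 0 ≤ (-1) ^ i * p (z i)) :
    ∃ ξ, 0 ≤ (-1) ^ l.length * Lop l p ξ := by
  induction l generalizing p z with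
  | nil => exact ⟨z 0, by simpa [Lop] using h0 0 (by simp)⟩
  | cons w l ih =>
    simp only [List.length_cons] at *
    have hy : ∀ i, ∃ y, i < l.length + 1 → z i < y ∧ y < z (i+1) ∧
        0 ≤ (-1) ^ i * (-(deriv p y + w * p y)) := by
      intro i
      by_cases hi : i < l.length + 1
      · obtain ⟨c, h1, h2, h3⟩ := mvt hp w (hz i (by omega))
        refine ⟨c, fun _ => ⟨h1, h2, ?_⟩⟩
        have a1 := h0 i (by omega)
        have a2 := h0 (i+1) (by omega)
        rw [pow_succ] at a2
        have e1 := Real.exp_pos (w * z i)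
        have e2 := Real.exp_pos (w * z (i+1))
        have h4 := Real.exp_pos (w * c)
        have h5 : 0 < z (i+1) - z i := by linarith
        have h6 : 0 ≤ (Real.exp (w * c) * (z (i+1) - z i)) *
            ((-1) ^ i * (-(deriv p c + w * p c))) := by
          have b1 := mul_nonneg e1.le a1
          have b2 := mul_nonneg e2.le a2
          calc (0:ℝ) ≤ _ := add_nonneg b1 b2
            _ = -(-1)^i * (Real.exp (w * z (i+1)) * p (z (i+1)) - Real.exp (w * z i) * p (z i)) := by ring
            _ = _ := by rw [← h3]; ring
        exact nonneg_of_mul_nonneg_right h6 (mul_pos h4 h5)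
      · exact ⟨0, fun h => absurd h hi⟩
    choose y hy using hy
    obtain ⟨ξ, hξ⟩ := ih (hp.step w).neg y
      (fun i hi => ((hy i (by omega)).2.1).trans (hy (i+1) hi).1) (fun i hi => (hy i hi).2.2)
    refine ⟨ξ, ?_⟩
    rw [Lop_neg l (hp.step w)] at hξ
    simp only [Lop]
    rw [pow_succ]
    linarith

theorem exp_sol {r : ℝ → ℝ} (hr : Sm r) (b : ℝ) (h : ∀ t, deriv r t + b * r t = 0) (t : ℝ) :
    r t = r 0 * Real.exp (-b * t) := by
  have hc := is_const_of_deriv_eq_zero (f := fun t => Real.exp (b * t) * r t)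
    (fun x => (hasDerivAt_expmul hr b x).differentiableAt)
    (fun x => by rw [(hasDerivAt_expmul hr b x).deriv, h x, mul_zero]) t 0
  simp only [mul_zero, Real.exp_zero, one_mul] at hc
  rw [← hc, neg_mul, Real.exp_neg]
  have := Real.exp_pos (b * t)
  field_simp

theorem Lop_surj (l : List ℝ) {r : ℝ → ℝ} (hr : Sm r) : ∃ e, Sm e ∧ Lop l e = r := by
  induction l generalizing r with
  | nil => exact ⟨r, hr, rfl⟩
  | cons h l ih =>
    obtain ⟨e, he, hel⟩ := ih hr
    have hsm : Sm (fun s => Real.exp (h * s) * e s) := by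
      unfold Sm at *; fun_prop
    have hI : ∀ t, HasDerivAt (fun t => ∫ s in (0:ℝ)..t, Real.exp (h * s) * e s)
        (Real.exp (h * t) * e t) t := fun t =>
      (hsm.diff.continuous).integral_hasStrictDerivAt 0 t |>.hasDerivAt
    have hIs : Sm (fun t => ∫ s in (0:ℝ)..t, Real.exp (h * s) * e s) := by
      refine contDiff_infty_iff_deriv.2 ⟨fun t => (hI t).differentiableAt, ?_⟩
      have : deriv (fun t => ∫ s in (0:ℝ)..t, Real.exp (h * s) * e s) =
        fun t => Real.exp (h * t) * e t := funext fun t => (hI t).deriv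
      rw [this]; exact hsm
    have hp : Sm (fun t => Real.exp (-h * t) * ∫ s in (0:ℝ)..t, Real.exp (h * s) * e s) := by
      unfold Sm at *; fun_prop
    refine ⟨_, hp, ?_⟩
    simp only [Lop]
    rw [← hel]
    congr 1
    funext t
    have := (hasDerivAt_expmul hIs (-h) t).deriv
    rw [this, (hI t).deriv]
    have h1 : Real.exp (-h * t) * Real.exp (h * t) = 1 := by rw [← Real.exp_add]; simp
    linear_combination e t * h1

theorem Sm_exp (b : ℝ) : Sm (fun t => Real.exp (b * t)) := by unfold Sm; fun_prop

theorem deriv_expb (b t : ℝ) : deriv (fun t => Real.exp (b * t)) t = b * Real.exp (b * t) := by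
  have h1 : HasDerivAt (fun t => Real.exp (b * t)) (Real.exp (b * t) * (b * 1)) t :=
    ((hasDerivAt_id t).const_mul b).exp
  rw [h1.deriv]; ring

theorem interp_s1 (l : List ℝ) (z v : ℕ → ℝ) (hz : Inc l.length z) :
    ∃ p, Sm p ∧ Lop l p = (fun _ => 0) ∧ ∀ i < l.length, p (z i) = v i := by
  induction l using List.reverseRecOn generalizing v with
  | nil => exact ⟨fun _ => 0, contDiff_const, rfl, by simp⟩
  | append_singleton w b ih =>
    simp only [List.length_append, List.length_singleton] at *
    have hz' : Inc w.length z := fun i hi => hz i (by omega)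
    obtain ⟨e, he, hel⟩ := Lop_surj w (Sm_exp (-b))
    obtain ⟨p0, hp0, hp0l, hp0v⟩ := ih v hz'
    obtain ⟨p1, hp1, hp1l, hp1v⟩ := ih (fun i => e (z i)) hz'
    have hψ := he.lin hp1 1 (-1)
    have hψl := Lop_lin w he hp1 1 (-1)
    set ψ : ℝ → ℝ := fun t => 1 * e t + -1 * p1 t with hψd
    have hψ0 : ∀ i < w.length, ψ (z i) = 0 := by
      intro i hi; simp [hψd, hp1v i hi]
    rw [hel, hp1l] at hψl
    simp only [one_mul, mul_zero, add_zero] at hψl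
    have hne : ψ (z w.length) ≠ 0 := by
      intro h0
      have h0' : ∀ i < w.length + 1, ψ (z i) = 0 := by
        intro i hi
        rcases Nat.lt_succ_iff_lt_or_eq.1 hi with h | h
        · exact hψ0 i h
        · rw [h]; exact h0
      obtain ⟨ξ, hξ⟩ := alt w hψ z hz (fun i hi => by simp [h0' i hi])
      obtain ⟨η, hη⟩ := alt w hψ.neg z hz (fun i hi => by simp [h0' i hi])
      rw [Lop_neg w hψ] at hη
      rw [hψl] at hξ hη
      have e1 := Real.exp_pos (-b * ξ)
      have e2 := Real.exp_pos (-b * η)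
      rcases neg_one_pow_eq_or ℝ w.length with h | h <;> rw [h] at hξ hη <;> linarith
    set c := (v w.length - p0 (z w.length)) / ψ (z w.length) with hc
    refine ⟨_, hp0.lin hψ 1 c, ?_, ?_⟩
    · rw [Lop_append, Lop_lin w hp0 hψ, hp0l, hψl]
      funext t
      simp only [mul_zero, zero_add]
      rw [deriv_const_mul _ ((Sm_exp (-b)).diff t), deriv_expb]
      ring
    · intro i hi
      rcases Nat.lt_succ_iff_lt_or_eq.1 hi with h | h
      · simp [hp0v i h, hψ0 i h]
      · rw [h, hc]; field_simp; ring

end MB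


namespace MB

theorem decay_le {p : ℝ → ℝ} (hp : Sm p) {h : ℝ} (hh : 0 < h)
    (ht : Tendsto (fun t => deriv p t + h * p t) atTop (𝓝 0)) {ε : ℝ} (hε : 0 < ε) :
    ∀ᶠ t in atTop, p t < ε := by
  set δ := ε / 2 with hδ
  have hδ0 : 0 < δ := by positivity
  obtain ⟨T, hT⟩ := eventually_atTop.1 (ht.eventually_lt_const (show (0:ℝ) < h * δ by positivity))
  have hq : Sm (fun t => p t - δ) := by unfold Sm at *; fun_prop
  have hanti : AntitoneOn (fun t => Real.exp (h * t) * (p t - δ)) (Set.Ici T) := by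
    apply antitoneOn_of_deriv_nonpos (convex_Ici _)
    · exact fun x _ => (hasDerivAt_expmul hq h x).continuousAt.continuousWithinAt
    · exact fun x _ => (hasDerivAt_expmul hq h x).differentiableAt.differentiableWithinAt
    · intro x hx
      rw [(hasDerivAt_expmul hq h x).deriv]
      simp only [interior_Ici, Set.mem_Ioi] at hx
      apply mul_nonpos_of_nonneg_of_nonpos (Real.exp_pos _).le
      have := hT x hx.le
      rw [deriv_sub_const]
      linarith
  have hlim : Tendsto (fun t => Real.exp (-(h * t)) * (Real.exp (h * T) * (p T - δ))) atTop (𝓝 0) := by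
    have : Tendsto (fun t => Real.exp (-(h * t))) atTop (𝓝 0) :=
      Real.tendsto_exp_neg_atTop_nhds_zero.comp (tendsto_id.const_mul_atTop hh)
    simpa using this.mul_const (Real.exp (h * T) * (p T - δ))
  filter_upwards [hlim.eventually_lt_const hδ0, eventually_ge_atTop T] with t h1 h2
  have h3 := hanti (le_refl T) h2 h2
  simp only at h3
  have h4 := mul_le_mul_of_nonneg_left h3 (Real.exp_pos (-(h * t))).le
  have h5 : Real.exp (-(h * t)) * Real.exp (h * t) = 1 := by rw [← Real.exp_add]; simp
  rw [← mul_assoc, h5] at h4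
  linarith

theorem decay1 {p : ℝ → ℝ} (hp : Sm p) {h : ℝ} (hh : 0 < h)
    (ht : Tendsto (fun t => deriv p t + h * p t) atTop (𝓝 0)) : Tendsto p atTop (𝓝 0) := by
  rw [Metric.tendsto_nhds]
  intro ε hε
  have ht' : Tendsto (fun t => deriv (fun t => - p t) t + h * (- p t)) atTop (𝓝 0) := by
    have := ht.neg
    simp only [neg_zero] at this
    refine this.congr (fun t => ?_)
    rw [deriv.fun_neg]; ring
  filter_upwards [decay_le hp hh ht hε, decay_le hp.neg hh ht' hε] with t h1 h2
  rw [Real.dist_eq, sub_zero, abs_lt]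
  constructor <;> linarith

theorem decay (l : List ℝ) (hl : ∀ a ∈ l, 0 < a) {p : ℝ → ℝ} (hp : Sm p)
    (ht : Tendsto (Lop l p) atTop (𝓝 0)) : Tendsto p atTop (𝓝 0) := by
  induction l generalizing p with
  | nil => exact ht
  | cons h l ih =>
    exact decay1 hp (hl h (by simp)) (ih (fun a ha => hl a (by simp [ha])) (hp.step h) ht)

theorem iter_const_zero (k : ℕ) : deriv^[k] (fun _ : ℝ => (0:ℝ)) = fun _ => 0 := by
  induction k with
  | zero => rfl
  | succ k ih => rw [Function.iterate_succ, Function.comp, deriv_const', ih]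

theorem decay_ker (l : List ℝ) (hl : ∀ a ∈ l, 0 < a) {p : ℝ → ℝ} (hp : Sm p)
    (h0 : Lop l p = fun _ => 0) (k : ℕ) : Tendsto (deriv^[k] p) atTop (𝓝 0) := by
  apply decay l hl (hp.iter k)
  rw [Lop_iter l hp, h0, iter_const_zero]
  exact tendsto_const_nhds

theorem max_inf {p : ℝ → ℝ} (hp : Continuous p) {a s : ℝ} (has : a < s) (ha : p a = 0)
    (hs : 0 < p s) (ht : Tendsto p atTop (𝓝 0)) : ∃ c, a < c ∧ deriv p c = 0 ∧ 0 < p c := by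
  obtain ⟨T, hT, hsT⟩ := ((ht.eventually_lt_const hs).and (eventually_gt_atTop s)).exists
  obtain ⟨c, hc, hmax⟩ := isCompact_Icc.exists_isMaxOn (s := Set.Icc a T)
    ⟨a, le_refl a, (has.trans hsT).le⟩ hp.continuousOn
  have h1 : p s ≤ p c := hmax ⟨has.le, hsT.le⟩
  have h2 : a < c := lt_of_le_of_ne hc.1 (by rintro rfl; linarith)
  have h3 : c < T := lt_of_le_of_ne hc.2 (by rintro rfl; linarith)
  exact ⟨c, h2, (hmax.isLocalMax (Icc_mem_nhds h2 h3)).deriv_eq_zero, by linarith⟩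

theorem rolle_inf_s1 {p : ℝ → ℝ} (hp : Sm p) {a : ℝ} (ha : p a = 0)
    (ht : Tendsto p atTop (𝓝 0)) : ∃ c, a < c ∧ deriv p c = 0 := by
  by_cases h : ∃ s, a < s ∧ p s ≠ 0
  · obtain ⟨s, has, hs⟩ := h
    rcases lt_or_gt_of_ne hs with h1 | h1
    · obtain ⟨c, h2, h3, -⟩ := max_inf (p := fun t => - p t) hp.neg.diff.continuous has (by simp [ha])
        (by linarith) (by simpa using ht.neg)
      refine ⟨c, h2, ?_⟩
      rw [deriv.fun_neg] at h3; linarith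
    · obtain ⟨c, h2, h3, -⟩ := max_inf hp.diff.continuous has ha h1 ht
      exact ⟨c, h2, h3⟩
  · push Not at h
    refine ⟨a + 1, by linarith, ?_⟩
    have : p =ᶠ[𝓝 (a+1)] fun _ => 0 := by
      filter_upwards [Ioi_mem_nhds (show a < a + 1 by linarith)] with x hx using h x hx
    rw [this.deriv_eq]; simp

theorem zeros_shift {p : ℝ → ℝ} (hp : Sm p) (ht : Tendsto p atTop (𝓝 0)) (N : ℕ) (z : ℕ → ℝ)
    (hz : Inc N z) (h0 : ∀ i < N, p (z i) = 0) :
    ∃ y, Inc N y ∧ (∀ i < N, deriv p (y i) = 0) ∧ (∀ i < N, z i < y i) ∧ ∀ i, i + 1 < N → y i < z (i + 1) := by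
  have hy : ∀ i, ∃ y, i < N → z i < y ∧ (i + 1 < N → y < z (i+1)) ∧ deriv p y = 0 := by
    intro i
    by_cases hi : i < N
    · by_cases hi' : i + 1 < N
      · obtain ⟨c, hc, h⟩ := exists_deriv_eq_zero (hz i hi') hp.diff.continuous.continuousOn
          (by rw [h0 i hi, h0 (i+1) hi'])
        exact ⟨c, fun _ => ⟨hc.1, fun _ => hc.2, h⟩⟩
      · obtain ⟨c, hc, h⟩ := rolle_inf_s1 hp (h0 i hi) ht
        exact ⟨c, fun _ => ⟨hc, fun h => absurd h hi', h⟩⟩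
    · exact ⟨0, fun h => absurd h hi⟩
  choose y hy using hy
  exact ⟨y, fun i hi => ((hy i (by omega)).2.1 hi).trans (hy (i+1) hi).1,
    fun i hi => (hy i hi).2.2, fun i hi => (hy i hi).1, fun i hi => (hy i (by omega)).2.1 hi⟩

theorem zeros_iter {p : ℝ → ℝ} (hp : Sm p) (ht : ∀ k, Tendsto (deriv^[k] p) atTop (𝓝 0)) (N : ℕ)
    (z : ℕ → ℝ) (hz : Inc N z) (h0 : ∀ i < N, p (z i) = 0) (x0 : ℝ) (hx : ∀ i < N, x0 ≤ z i)
    (k : ℕ) : ∃ y, Inc N y ∧ (∀ i < N, deriv^[k] p (y i) = 0) ∧ ∀ i < N, x0 ≤ y i := by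
  induction k with
  | zero => exact ⟨z, hz, h0, hx⟩
  | succ k ih =>
    obtain ⟨y, h1, h2, h3⟩ := ih
    obtain ⟨y', h1', h2', h3', -⟩ := zeros_shift (hp.iter k) (ht k) N y h1 h2
    refine ⟨y', h1', ?_, fun i hi => (h3 i hi).trans (h3' i hi).le⟩
    rw [Function.iterate_succ']
    exact h2'

theorem iter_exp (k : ℕ) (c b : ℝ) :
    deriv^[k] (fun t => c * Real.exp (-b * t)) = fun t => c * (-b)^k * Real.exp (-b * t) := by
  induction k with
  | zero => simp
  | succ k ih =>
    rw [Function.iterate_succ', Function.comp, ih]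
    funext t
    rw [deriv_const_mul _ ((Sm_exp (-b)).diff t), deriv_expb]
    ring

theorem iter_lin {p q : ℝ → ℝ} (hp : Sm p) (hq : Sm q) (a b : ℝ) (k : ℕ) :
    deriv^[k] (fun t => a * p t + b * q t) = fun t => a * deriv^[k] p t + b * deriv^[k] q t := by
  induction k generalizing p q with
  | zero => rfl
  | succ k ih =>
    simp only [Function.iterate_succ, Function.comp]
    rw [deriv_lin hp hq, ih hp.deriv hq.deriv]

theorem om (w : List ℝ) (b : ℝ) {p : ℝ → ℝ} (hp : Sm p) (h0 : Lop (w ++ [b]) p = fun _ => 0)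
    (z : ℕ → ℝ) (hz : Inc (w.length + 1) z) (hs : ∀ i < w.length + 1, 0 ≤ (-1) ^ i * p (z i)) :
    ∃ c, 0 ≤ (-1) ^ w.length * c ∧ Lop w p = fun t => c * Real.exp (-b * t) := by
  rw [Lop_append] at h0
  have h1 := exp_sol (Lop_smooth w hp) b (fun t => congrFun h0 t)
  refine ⟨Lop w p 0, ?_, funext h1⟩
  obtain ⟨ξ, hξ⟩ := alt w hp z hz hs
  rw [h1 ξ, ← mul_assoc] at hξ
  exact nonneg_of_mul_nonneg_left hξ (Real.exp_pos _)

theorem step (w : List ℝ) (a b : ℝ) (hw : ∀ x ∈ w, 0 < x) (ha : 0 < a) (hab : a ≤ b)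
    (z : ℕ → ℝ) (hz : Inc (w.length + 1) z) (hz0 : z 0 = 0)
    {s s' : ℝ → ℝ} (hs : Sm s) (hs' : Sm s') (hk : Lop (a :: w) s = fun _ => 0)
    (hk' : Lop (w ++ [b]) s' = fun _ => 0) (heq : ∀ i < w.length + 1, s (z i) = s' (z i))
    (halt : ∀ i < w.length + 1, 0 ≤ (-1) ^ i * s' (z i)) (k : ℕ) :
    (-1) ^ k * deriv^[k] s 0 ≤ (-1) ^ k * deriv^[k] s' 0 := by
  have hb : 0 < b := ha.trans_le hab
  obtain ⟨c, hc, hW⟩ := om w b hs' hk' z hz halt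
  have hg := hs'.lin hs 1 (-1)
  have hgi := iter_lin hs' hs 1 (-1)
  have hgt : ∀ k, Tendsto (deriv^[k] (fun t => 1 * s' t + -1 * s t)) atTop (𝓝 0) := by
    intro k
    rw [hgi k]
    have h1 := decay_ker (w ++ [b]) (by
      intro x hx; simp at hx; rcases hx with h | rfl
      · exact hw x h
      · exact hb) hs' hk' k
    have h2 := decay_ker (a :: w) (by
      intro x hx; simp at hx; rcases hx with rfl | h
      · exact ha
      · exact hw x h) hs hk k
    simpa using (h1.const_mul 1).add (h2.const_mul (-1))
  have hLg : Lop (a :: w) (fun t => 1 * s' t + -1 * s t) = fun t => ((a - b) * c) * Real.exp (-b * t) := by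
    rw [Lop_lin _ hs' hs, hk]
    have : Lop (a :: w) s' = fun t => ((a - b) * c) * Real.exp (-b * t) := by
      simp only [Lop]
      have h1 := Lop_lin w hs'.deriv hs' 1 a
      simp only [one_mul] at h1
      rw [h1, Lop_deriv w hs', hW]
      funext t
      rw [deriv_const_mul _ ((Sm_exp (-b)).diff t), deriv_expb]
      ring
    rw [this]; simp
  obtain ⟨y, y1, y2, y3⟩ := zeros_iter hg hgt (w.length + 1) z hz
    (fun i hi => by simp [heq i hi]) 0 (fun i hi => hz0 ▸ hz.zero_le hi) k
  have hgk := hg.iter k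
  have := signs (a :: w) (hgk.lin hgk ((-1)^k) 0) y 0 y1 (fun i hi => by simp only [y2 i hi]; ring) y3 (by
    intro t
    rw [Lop_lin _ hgk hgk, Lop_iter _ hg, hLg, iter_exp]
    have e := Real.exp_pos (-b * t)
    have hbk : 0 ≤ b ^ k := by positivity
    calc (0:ℝ) ≤ (b - a) * b ^ k * ((-1) ^ w.length * c) * Real.exp (-b * t) := by
          have : 0 ≤ b - a := by linarith
          positivity
      _ = _ := by
          rw [neg_pow b k]
          have h2 : ((-1:ℝ)^k) * (-1)^k = 1 := by rw [← mul_pow]; simp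
          simp only [List.length_cons, pow_succ]
          linear_combination (-(b - a) * b ^ k * ((-1) ^ w.length * c) * Real.exp (-b * t)) * h2)
  rw [hgi k] at this
  linarith

theorem last (w : List ℝ) (b : ℝ) (hw : ∀ x ∈ w, 0 < x) (hb : 0 < b)
    (z : ℕ → ℝ) (hz : Inc (w.length + 1) z) (hz0 : z 0 = 0)
    {g : ℝ → ℝ} (hg : Sm g) (hk : Lop (w ++ [b]) g = fun _ => 0)
    (halt : ∀ i < w.length + 1, 0 < (-1) ^ i * g (z i)) (k : ℕ) :
    0 ≤ (-1) ^ k * deriv^[k] g 0 := by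
  obtain ⟨c, hc, hW⟩ := om w b hg hk z hz (fun i hi => (halt i hi).le)
  have hgt := decay_ker (w ++ [b]) (by
      intro x hx; simp at hx; rcases hx with h | rfl
      · exact hw x h
      · exact hb) hg hk
  have hx : ∀ i, ∃ x, i < w.length → z i < x ∧ x < z (i+1) ∧ g x = 0 := by
    intro i
    by_cases hi : i < w.length
    · have h1 := halt i (by omega)
      have h2 := halt (i+1) (by omega)
      rw [pow_succ] at h2
      have hlt := hz i (by omega)
      have hiv := intermediate_value_Ioo hlt.le
        (f := fun t => (-1)^(i+1) * g t) (by have := hg.diff.continuous; fun_prop)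
      have : (0:ℝ) ∈ Set.Ioo ((-1)^(i+1) * g (z i)) ((-1)^(i+1) * g (z (i+1))) := by
        constructor <;> rw [pow_succ] <;> linarith
      obtain ⟨x, hx, hx0⟩ := hiv this
      refine ⟨x, fun _ => ⟨hx.1, hx.2, ?_⟩⟩
      simpa using hx0
    · exact ⟨0, fun h => absurd h hi⟩
  choose x hx using hx
  obtain ⟨y, y1, y2, y3⟩ := zeros_iter hg hgt w.length x
    (fun i hi => (hx i (by omega)).2.1.trans (hx (i+1) hi).1)
    (fun i hi => (hx i hi).2.2) 0 (fun i hi => by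
      have := hz.zero_le (show i < w.length + 1 by omega)
      have := (hx i hi).1
      linarith) k
  have hgk := hg.iter k
  have := signs w (hgk.lin hgk ((-1)^k) 0) y 0 y1 (fun i hi => by simp only [y2 i hi]; ring) y3 (by
    intro t
    rw [Lop_lin _ hgk hgk, Lop_iter _ hg, hW, iter_exp]
    have e := Real.exp_pos (-b * t)
    have hbk : 0 ≤ b ^ k := by positivity
    calc (0:ℝ) ≤ b ^ k * ((-1) ^ w.length * c) * Real.exp (-b * t) := by positivity
      _ = _ := by
          rw [neg_pow b k]
          have h2 : ((-1:ℝ)^k) * (-1)^k = 1 := by rw [← mul_pow]; simp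
          linear_combination (- b ^ k * ((-1) ^ w.length * c) * Real.exp (-b * t)) * h2)
  linarith

theorem chain (d : ℕ) (z : ℕ → ℝ) (hz : Inc d z) (hz0 : z 0 = 0) {f : ℝ → ℝ} (hf : Sm f)
    (hfk : Lop (List.replicate d 1) f = fun _ => 0) (halt : ∀ i < d, 0 ≤ (-1) ^ i * f (z i)) (k : ℕ)
    (u : List ℝ) (m : ℕ) (hum : u.length + m = d) (hu : ∀ x ∈ u, 0 < x ∧ x ≤ 1) :
    ∃ s, Sm s ∧ Lop (u ++ List.replicate m 1) s = (fun _ => 0) ∧ (∀ i < d, s (z i) = f (z i)) ∧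
      (-1) ^ k * deriv^[k] s 0 ≤ (-1) ^ k * deriv^[k] f 0 := by
  induction u generalizing m with
  | nil =>
    simp at hum; subst hum
    exact ⟨f, hf, by simpa using hfk, fun _ _ => rfl, le_rfl⟩
  | cons a u ih =>
    simp only [List.length_cons] at hum
    obtain ⟨s', h1, h2, h3, h4⟩ := ih (m+1) (by omega) (fun x hx => hu x (by simp [hx]))
    rw [List.replicate_succ', ← List.append_assoc] at h2
    have hlen : (u ++ List.replicate m (1:ℝ)).length + 1 = d := by simp; omega
    obtain ⟨s, g1, g2, g3⟩ := interp_s1 (a :: (u ++ List.replicate m 1)) z (fun i => f (z i))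
      (by simp only [List.length_cons]; rw [hlen]; exact hz)
    simp only [List.length_cons, hlen] at g3
    refine ⟨s, g1, g2, g3, le_trans ?_ h4⟩
    have ha := hu a (by simp)
    refine step (u ++ List.replicate m 1) a 1 ?_ ha.1 ha.2 z (hlen ▸ hz) hz0 g1 h1 g2 h2 ?_ ?_ k
    · intro x hx
      simp only [List.mem_append, List.mem_replicate] at hx
      rcases hx with hx | hx
      · exact (hu x (by simp [hx])).1
      · rw [hx.2]; exact one_pos
    · intro i hi; rw [g3 i (by omega), h3 i (by omega)]
    · intro i hi; rw [h3 i (by omega)]; exact halt i (by omega)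

theorem compare (u : List ℝ) (hu0 : u ≠ []) (z : ℕ → ℝ) (hz : Inc u.length z) (hz0 : z 0 = 0)
    {f : ℝ → ℝ} (hf : Sm f)
    (hfk : Lop (List.replicate u.length 1) f = fun _ => 0)
    (halt : ∀ i < u.length, 1 ≤ (-1) ^ i * f (z i)) (k : ℕ)
    (hu : ∀ x ∈ u, 0 < x ∧ x ≤ 1) {p : ℝ → ℝ} (hp : Sm p) (hpk : Lop u p = fun _ => 0)
    {B : ℝ} (hB : ∀ i < u.length, |p (z i)| < B) :
    |deriv^[k] p 0| ≤ (-1) ^ k * deriv^[k] f 0 * B := by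
  have hlen : 0 < u.length := List.length_pos_iff.2 hu0
  have hB0 : 0 < B := (abs_nonneg _).trans_lt (hB 0 hlen)
  obtain ⟨s, s1, s2, s3, s4⟩ := chain u.length z hz hz0 hf hfk
    (fun i hi => zero_le_one.trans (halt i hi)) k u 0 rfl hu
  simp only [List.replicate_zero, List.append_nil] at s2
  have key : ∀ e : ℝ, e = 1 ∨ e = -1 → 0 ≤ (-1)^k * (B * deriv^[k] s 0 + e * deriv^[k] p 0) := by
    intro e he
    have hg := s1.lin hp B e
    have hgk : Lop u (fun t => B * s t + e * p t) = fun _ => 0 := by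
      rw [Lop_lin u s1 hp, s2, hpk]; simp
    rw [← congrFun (iter_lin s1 hp B e k) 0]
    obtain ⟨w, b, rfl⟩ : ∃ w b, u = w ++ [b] := ⟨u.dropLast, u.getLast hu0, (List.dropLast_append_getLast hu0).symm⟩
    simp only [List.length_append, List.length_singleton] at *
    refine last w b (fun x hx => (hu x (by simp [hx])).1) (hu b (by simp)).1 z hz hz0 hg hgk ?_ k
    intro i hi
    have h1 := halt i hi
    have h2 := abs_lt.1 (hB i hi)
    have h3 : B ≤ B * ((-1)^i * f (z i)) := le_mul_of_one_le_right hB0.le h1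
    rw [s3 i hi]
    rcases neg_one_pow_eq_or ℝ i with h | h <;> rw [h] at h3 ⊢ <;> rcases he with rfl | rfl <;> linarith
  have k1 := key 1 (Or.inl rfl)
  have k2 := key (-1) (Or.inr rfl)
  have s5 := mul_le_mul_of_nonneg_right s4 hB0.le
  rw [abs_le]
  rcases neg_one_pow_eq_or ℝ k with h | h <;> rw [h] at k1 k2 s5 ⊢ <;> constructor <;> linarith

end MB


namespace MB
open Polynomial in
noncomputable def ee (j : ℕ) : ℝ := (-8) ^ j / ((Nat.centralBinom j : ℝ) * (j.factorial : ℝ))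

theorem ee_succ (j : ℕ) : (2 * (j:ℝ) + 1) * ee (j + 1) = -4 * ee j := by
  unfold ee
  have h1 : ((j:ℝ) + 1) * (Nat.centralBinom (j+1) : ℝ) = 2 * (2 * j + 1) * (Nat.centralBinom j : ℝ) := by
    exact_mod_cast Nat.succ_mul_centralBinom_succ j
  have h2 : (Nat.centralBinom j : ℝ) ≠ 0 := by exact_mod_cast Nat.centralBinom_ne_zero j
  have h3 : (Nat.centralBinom (j+1) : ℝ) ≠ 0 := by exact_mod_cast Nat.centralBinom_ne_zero (j+1)
  have h4 : (j.factorial : ℝ) ≠ 0 := by exact_mod_cast Nat.factorial_ne_zero j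
  have h5 : (j:ℝ) + 1 ≠ 0 := by positivity
  rw [Nat.factorial_succ]
  push_cast
  field_simp
  rw [pow_succ]
  linear_combination (4 * (-8)^j) * h1

open Polynomial in
noncomputable def QQ (n : ℕ) : ℝ[X] := ∑ j ∈ Finset.range (n + 1), C (ee j * (n.choose j : ℝ)) * X ^ j

theorem QQ_coeff (n j : ℕ) : (QQ n).coeff j = ee j * (n.choose j : ℝ) := by
  unfold QQ
  rw [Polynomial.finsetSum_coeff]
  simp only [Polynomial.coeff_C_mul, Polynomial.coeff_X_pow]
  by_cases hj : j < n + 1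
  · rw [Finset.sum_eq_single j]
    · simp
    · intro b _ hb; simp [Ne.symm hb]
    · intro h; simp at h; omega
  · rw [Nat.choose_eq_zero_of_lt (by omega)]
    rw [Finset.sum_eq_zero]
    · simp
    · intro b hb
      simp at hb
      rw [if_neg (by omega)]; simp

theorem choose_rec (n j : ℕ) : ((j:ℝ) + 1) * (n.choose (j+1) : ℝ) = ((n:ℝ) - j) * (n.choose j : ℝ) := by
  have h := Nat.choose_succ_right_eq n j
  by_cases hj : j ≤ n
  · have : ((n - j : ℕ) : ℝ) = (n:ℝ) - j := by push_cast [hj]; ring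
    have h' : (n.choose (j+1) : ℝ) * ((j:ℝ) + 1) = (n.choose j : ℝ) * ((n - j : ℕ) : ℝ) := by exact_mod_cast h
    rw [this] at h'; linarith
  · rw [Nat.choose_eq_zero_of_lt (by omega : n < j), Nat.choose_eq_zero_of_lt (by omega : n < j + 1)]
    simp

open Polynomial in
theorem QQ_ode (n : ℕ) : C 2 * (X * derivative (derivative (QQ n))) + derivative (QQ n)
    - C 4 * (X * derivative (QQ n)) + C (4 * (n:ℝ)) * QQ n = 0 := by
  ext j
  rcases j with _ | j
  · simp only [coeff_add, coeff_sub, coeff_C_mul, coeff_X_mul_zero, coeff_derivative, QQ_coeff, coeff_zero]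
    have h1 := choose_rec n 0
    have h2 := ee_succ 0
    simp at *
    linear_combination (n:ℝ) * h2
  · simp only [coeff_add, coeff_sub, coeff_C_mul, coeff_X_mul, coeff_derivative, QQ_coeff, coeff_zero]
    have h1 := choose_rec n (j+1)
    have h2 := ee_succ (j+1)
    push_cast at *
    linear_combination ee (j+1+1) * (2 * ((j:ℝ)+1) + 1) * h1 + ((n:ℝ) - (j+1)) * (n.choose (j+1) : ℝ) * h2

open Polynomial in
theorem QQ_rec (n : ℕ) : C (2 * (n:ℝ) + 1) * QQ (n+1) = C (2 * (n:ℝ) + 1) * QQ n - C 4 * (X * QQ n)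
    + C 2 * (X * derivative (QQ n)) := by
  ext j
  rcases j with _ | j
  · simp [coeff_add, coeff_sub, QQ_coeff]
  · simp only [coeff_add, coeff_sub, coeff_C_mul, coeff_X_mul, coeff_derivative, QQ_coeff]
    have h1 := choose_rec n j
    have h2 := ee_succ j
    rw [Nat.choose_succ_succ]
    push_cast at *
    linear_combination (n.choose j : ℝ) * h2 - 2 * ee (j+1) * h1

theorem QQ_zero_eval (n : ℕ) : (QQ n).eval 0 = 1 := by
  rw [← Polynomial.coeff_zero_eq_eval_zero, QQ_coeff]; simp [ee]

theorem QQ_natDegree (n : ℕ) : (QQ n).natDegree ≤ n := by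
  rw [Polynomial.natDegree_le_iff_coeff_eq_zero]
  intro N hN
  rw [QQ_coeff, Nat.choose_eq_zero_of_lt hN]; simp

noncomputable def AA (n : ℕ) (v : ℝ) : ℝ := (QQ n).eval (v ^ 2 / 4) * Real.exp (-v ^ 2 / 2)

noncomputable def AA1 (n : ℕ) (v : ℝ) : ℝ :=
  (v / 2 * (Polynomial.derivative (QQ n)).eval (v ^ 2 / 4) - v * (QQ n).eval (v ^ 2 / 4)) * Real.exp (-v ^ 2 / 2)

theorem hd_aux (P : Polynomial ℝ) (v : ℝ) : HasDerivAt (fun v : ℝ => P.eval (v ^ 2 / 4))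
    ((Polynomial.derivative P).eval (v ^ 2 / 4) * (v / 2)) v := by
  have h1 : HasDerivAt (fun v : ℝ => v ^ 2 / 4) (v / 2) v :=
    ((hasDerivAt_pow 2 v).div_const 4).congr_deriv (by ring)
  exact HasDerivAt.comp v (h₂ := fun x => P.eval x) (P.hasDerivAt (v ^ 2 / 4)) h1

theorem hd_gauss (v : ℝ) : HasDerivAt (fun v : ℝ => Real.exp (-v ^ 2 / 2)) (- v * Real.exp (-v ^ 2 / 2)) v := by
  have h1 : HasDerivAt (fun v : ℝ => -v ^ 2 / 2) (- v) v :=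
    (((hasDerivAt_pow 2 v).neg).div_const 2).congr_deriv (by ring)
  exact h1.exp.congr_deriv (by ring)

theorem hd_AA (n : ℕ) (v : ℝ) : HasDerivAt (AA n) (AA1 n v) v := by
  exact ((hd_aux (QQ n) v).mul (hd_gauss v)).congr_deriv (by unfold AA1; ring)

theorem hd_AA1 (n : ℕ) (v : ℝ) : HasDerivAt (AA1 n) (-(2 * n + 1) * AA (n+1) v) v := by
  have h1 := (((hasDerivAt_id v).div_const 2).mul (hd_aux (Polynomial.derivative (QQ n)) v)).sub
    ((hasDerivAt_id v).mul (hd_aux (QQ n) v))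
  refine (h1.mul (hd_gauss v)).congr_deriv ?_
  have o := congrArg (Polynomial.eval (v ^ 2 / 4)) (QQ_ode n)
  have r := congrArg (Polynomial.eval (v ^ 2 / 4)) (QQ_rec n)
  simp only [Polynomial.eval_add, Polynomial.eval_sub, Polynomial.eval_mul, Polynomial.eval_C,
    Polynomial.eval_X, Polynomial.eval_zero] at o r
  unfold AA
  simp only [Pi.mul_apply, Pi.sub_apply, id]
  linear_combination Real.exp (-v ^ 2 / 2) * (o / 2 + r)

theorem decay_gauss (P : Polynomial ℝ) : Tendsto (fun v => P.eval v * Real.exp (-v ^ 2 / 2)) atTop (𝓝 0) := by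
  have h := P.tendsto_div_exp_atTop
  refine squeeze_zero_norm' ?_ (tendsto_zero_iff_norm_tendsto_zero.1 h)
  filter_upwards [eventually_ge_atTop 2] with v hv
  rw [div_eq_mul_inv (Polynomial.eval v P), ← Real.exp_neg, norm_mul, norm_mul]
  refine mul_le_mul_of_nonneg_left ?_ (norm_nonneg _)
  rw [Real.norm_of_nonneg (Real.exp_pos _).le, Real.norm_of_nonneg (Real.exp_pos _).le, Real.exp_le_exp]
  nlinarith

open Polynomial in
theorem decay_AA (n : ℕ) : Tendsto (AA n) atTop (𝓝 0) := by
  refine (decay_gauss ((QQ n).comp (C (1/4) * X ^ 2))).congr (fun v => ?_)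
  simp [AA, eval_comp]; congr 1; ring

open Polynomial in
theorem decay_AA1 (n : ℕ) : Tendsto (AA1 n) atTop (𝓝 0) := by
  refine (decay_gauss (C (1/2) * X * (derivative (QQ n)).comp (C (1/4) * X ^ 2)
    - X * (QQ n).comp (C (1/4) * X ^ 2))).congr (fun v => ?_)
  simp [AA1, eval_comp]
  have : 4⁻¹ * v ^ 2 = v ^ 2 / 4 := by ring
  rw [this]; ring

theorem Sm_poly (P : Polynomial ℝ) : Sm (fun t => P.eval t) := by
  have := Polynomial.contDiff_aeval (𝕜 := ℝ) P ∞
  simpa [Sm, Polynomial.aeval_def, Polynomial.eval₂_eq_eval_map] using this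

theorem Sm_AA (n : ℕ) : Sm (AA n) := by
  unfold AA Sm
  have := Sm_poly (QQ n)
  have h2 : ContDiff ℝ ∞ (fun v : ℝ => (QQ n).eval (v^2/4)) := this.comp (f := fun v : ℝ => v^2/4) (by fun_prop)
  exact h2.mul (by fun_prop)

theorem AA_zeros (n : ℕ) : ∃ z, Inc n z ∧ (∀ i < n, AA n (z i) = 0) ∧ ∀ i < n, 0 < z i := by
  induction n with
  | zero => exact ⟨fun _ => 0, fun i hi => by omega, fun i hi => by omega, fun i hi => by omega⟩
  | succ n ih =>
    obtain ⟨z, z1, z2, z3⟩ := ih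
    have d1 : deriv (AA n) = AA1 n := funext fun v => (hd_AA n v).deriv
    obtain ⟨y, y1, y2, y3, -⟩ := zeros_shift (Sm_AA n) (decay_AA n) n z z1 z2
    rw [d1] at y2
    have hS : Sm (AA1 n) := d1 ▸ (Sm_AA n).deriv
    obtain ⟨x, x1, x2, x3, -⟩ := zeros_shift hS (decay_AA1 n) (n+1)
      (fun i => Nat.casesOn i 0 y) (by
        intro i hi
        rcases i with _ | i
        · exact (z3 0 (by omega)).trans (y3 0 (by omega))
        · exact y1 i (by omega)) (by
        intro i hi
        rcases i with _ | i
        · simp [AA1]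
        · exact y2 i (by omega))
    refine ⟨x, x1, ?_, ?_⟩
    · intro i hi
      have h := x2 i hi
      rw [(hd_AA1 n _).deriv] at h
      rcases mul_eq_zero.1 h with h | h
      · have : (0:ℝ) ≤ n := Nat.cast_nonneg n
        linarith
      · exact h
    · intro i hi
      refine lt_of_le_of_lt ?_ (x3 i hi)
      rcases i with _ | i
      · exact le_rfl
      · exact ((z3 i (by omega)).trans (y3 i (by omega))).le

theorem QQ_zeros (n : ℕ) : ∃ z, Inc n z ∧ (∀ i < n, (QQ n).eval (z i) = 0) ∧ ∀ i < n, 0 < z i := by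
  obtain ⟨z, z1, z2, z3⟩ := AA_zeros n
  refine ⟨fun i => z i ^ 2 / 4, ?_, ?_, ?_⟩
  · intro i hi
    have := z1 i hi
    have := z3 i (by omega)
    simp only
    nlinarith
  · intro i hi
    rcases mul_eq_zero.1 (z2 i hi) with h | h
    · exact h
    · exact absurd h (Real.exp_pos _).ne'
  · intro i hi
    have := z3 i hi
    positivity

theorem Inc.lt {N : ℕ} {z : ℕ → ℝ} (h : Inc N z) {i j : ℕ} (hij : i < j) (hj : j < N) : z i < z j := by
  induction j with
  | zero => omega
  | succ j ih =>
    rcases Nat.lt_succ_iff_lt_or_eq.1 hij with h1 | rfl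
    · exact (ih h1 (by omega)).trans (h j hj)
    · exact h i hj

theorem Inc.le {N : ℕ} {z : ℕ → ℝ} (h : Inc N z) {i j : ℕ} (hij : i ≤ j) (hj : j < N) : z i ≤ z j := by
  rcases Nat.lt_or_eq_of_le hij with h1 | rfl
  · exact (h.lt h1 hj).le
  · exact le_rfl

open Polynomial in
theorem QQ_prod (n : ℕ) (z : ℕ → ℝ) (hz : Inc n z) (h0 : ∀ i < n, (QQ n).eval (z i) = 0)
    (hp : ∀ i < n, 0 < z i) : QQ n = ∏ i ∈ Finset.range n, (1 - C (z i)⁻¹ * X) := by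
  have hinj : Function.Injective (fun i : Fin (n+1) => (Nat.casesOn (i:ℕ) 0 z : ℝ)) := by
    have key : StrictMono (fun i : Fin (n+1) => (Nat.casesOn (i:ℕ) 0 z : ℝ)) := by
      rintro ⟨i, hi⟩ ⟨j, hj⟩ hij
      simp only [Fin.mk_lt_mk] at hij
      rcases j with _ | j
      · omega
      rcases i with _ | i
      · exact hp j (by omega)
      · exact hz.lt (show i < j by omega) (by omega)
    exact key.injective
  refine eq_of_natDegree_lt_card_of_eval_eq _ _ hinj ?_ ?_
  · rintro ⟨i, hi⟩
    rcases i with _ | i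
    · simp [QQ_zero_eval, eval_prod]
    · simp only [h0 i (by omega), eval_prod]
      symm
      apply Finset.prod_eq_zero (i := i) (Finset.mem_range.2 (by omega))
      have := (hp i (by omega)).ne'
      simp [this]
  · rw [Fintype.card_fin, Nat.lt_succ_iff]
    apply max_le (QQ_natDegree n)
    refine (natDegree_prod_le _ _).trans ?_
    calc _ ≤ ∑ i ∈ Finset.range n, 1 := by
          apply Finset.sum_le_sum
          intro i _
          compute_degree
      _ = n := by simp

theorem prod_sign (n m : ℕ) (hm : m ≤ n) (a : ℕ → ℝ) (h1 : ∀ i < m, a i < 0)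
    (h2 : ∀ i, m ≤ i → i < n → 0 < a i) : 0 < (-1) ^ m * ∏ i ∈ Finset.range n, a i := by
  induction n, hm using Nat.le_induction with
  | base =>
    have : (-1:ℝ) ^ m = ∏ i ∈ Finset.range m, (-1) := by simp
    rw [this, ← Finset.prod_mul_distrib]
    apply Finset.prod_pos
    intro i hi
    have := h1 i (Finset.mem_range.1 hi)
    linarith
  | succ n hmn ih =>
    rw [Finset.prod_range_succ, ← mul_assoc]
    exact mul_pos (ih (fun i h h' => h2 i h (by omega))) (h2 n hmn (by omega))

end MB

namespace MB

theorem Sm_pe (q : Polynomial ℝ) (g : ℝ) : Sm (fun t => q.eval t * Real.exp (-g * t)) :=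
  ContDiff.mul (Sm_poly q) (Sm_exp (-g))

theorem hd_pe (q : Polynomial ℝ) (g t : ℝ) : HasDerivAt (fun t => q.eval t * Real.exp (-g * t))
    ((Polynomial.derivative q - Polynomial.C g * q).eval t * Real.exp (-g * t)) t := by
  have h2 : HasDerivAt (fun t => Real.exp (-g * t)) (Real.exp (-g * t) * (-g * 1)) t :=
    ((hasDerivAt_id t).const_mul (-g)).exp
  exact ((q.hasDerivAt t).mul h2).congr_deriv (by simp; ring)

theorem ker_pe (l : List ℝ) (g : ℝ) (q : Polynomial ℝ) (hq : ∀ m, l.count g ≤ m → q.coeff m = 0) :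
    Lop l (fun t => q.eval t * Real.exp (-g * t)) = fun _ => 0 := by
  induction l generalizing q with
  | nil =>
    have : q = 0 := by ext m; simpa using hq m (by simp)
    subst this
    simp [Lop]
  | cons w l ih =>
    simp only [Lop]
    have : (fun t => deriv (fun t => q.eval t * Real.exp (-g * t)) t + w * (q.eval t * Real.exp (-g * t)))
        = fun t => (Polynomial.derivative q + Polynomial.C (w - g) * q).eval t * Real.exp (-g * t) := by
      funext t
      rw [(hd_pe q g t).deriv]
      simp; ring
    rw [this]
    apply ih
    intro m hm
    rw [Polynomial.coeff_add, Polynomial.coeff_derivative, Polynomial.coeff_C_mul]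
    by_cases hw : w = g
    · subst hw
      rw [hq (m+1) (by simpa using hm)]
      simp
    · have hc : (w :: l).count g = l.count g := List.count_cons_of_ne hw
      rw [hq m (by omega), hq (m+1) (by omega)]; simp

noncomputable def ff (n : ℕ) (t : ℝ) : ℝ := (QQ n).eval t * Real.exp (-1 * t)

theorem ff_ker (n : ℕ) : Lop (List.replicate (n+1) 1) (ff n) = fun _ => 0 := by
  apply ker_pe
  intro m hm
  rw [List.count_replicate_self] at hm
  rw [QQ_coeff, Nat.choose_eq_zero_of_lt (by omega)]; simp

theorem Sm_ff (n : ℕ) : Sm (ff n) := Sm_pe _ _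

theorem ff_tendsto (n : ℕ) : Tendsto (ff n) atTop (𝓝 0) :=
  decay_ker _ (by intro a ha; rw [List.eq_of_mem_replicate ha]; exact one_pos) (Sm_ff n) (ff_ker n) 0

theorem ff_ode (n : ℕ) (t : ℝ) :
    t * deriv (deriv (ff n)) t = (t - (2 * n + 1/2)) * ff n t - deriv (ff n) t / 2 := by
  have h1 : deriv (ff n) = fun t => (Polynomial.derivative (QQ n) - Polynomial.C 1 * QQ n).eval t * Real.exp (-1 * t) :=
    funext fun t => (hd_pe (QQ n) 1 t).deriv
  have h2 := (hd_pe (Polynomial.derivative (QQ n) - Polynomial.C 1 * QQ n) 1 t).deriv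
  rw [h1, h2]
  unfold ff
  have o := congrArg (Polynomial.eval t) (QQ_ode n)
  simp only [Polynomial.eval_add, Polynomial.eval_sub, Polynomial.eval_mul, Polynomial.eval_C,
    Polynomial.eval_X, Polynomial.eval_zero, Polynomial.derivative_sub, Polynomial.derivative_mul,
    Polynomial.derivative_C] at o ⊢
  linear_combination Real.exp (-1 * t) / 2 * o

theorem crit_lt {f : ℝ → ℝ} (hf : Sm f) {R : ℝ} (hR : 0 < R) (ht : Tendsto f atTop (𝓝 0))
    (ode : ∀ t, t * deriv (deriv f) t = (t - R) * f t - deriv f t / 2) {c : ℝ}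
    (hc : deriv f c = 0) (hne : f c ≠ 0) : c < R := by
  by_contra hcR
  push Not at hcR
  have hD : ∀ s > 0, HasDerivAt (fun s => Real.sqrt s * (f s * deriv f s))
      (1 / (2 * Real.sqrt s) * (f s * deriv f s) + Real.sqrt s * (deriv f s * deriv f s + f s * deriv (deriv f) s)) s := by
    intro s hs
    exact (Real.hasDerivAt_sqrt hs.ne').mul ((hf.diff s).hasDerivAt.mul (hf.deriv.diff s).hasDerivAt)
  have hmono : MonotoneOn (fun s => Real.sqrt s * (f s * deriv f s)) (Set.Ici c) := by
    have hpos : ∀ s ∈ Set.Ici c, 0 < s := fun s hs => lt_of_lt_of_le (hR.trans_le hcR) hs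
    apply monotoneOn_of_deriv_nonneg (convex_Ici _)
    · exact fun s hs => (hD s (hpos s hs)).continuousAt.continuousWithinAt
    · intro s hs
      exact (hD s (hpos s (interior_subset hs))).differentiableAt.differentiableWithinAt
    · intro s hs
      have hs' : c ≤ s := interior_subset hs
      have h0 := hpos s hs'
      rw [(hD s h0).deriv]
      have hq := Real.sqrt_pos.2 h0
      have hqq := Real.mul_self_sqrt h0.le
      have : 1 / (2 * Real.sqrt s) * (f s * deriv f s) + Real.sqrt s * (deriv f s * deriv f s + f s * deriv (deriv f) s)
          = Real.sqrt s * deriv f s ^ 2 + (s - R) * f s ^ 2 / Real.sqrt s := by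
        field_simp
        have o := ode s
        have : Real.sqrt s ^ 2 = s := Real.sq_sqrt h0.le
        rw [this]
        linear_combination 2 * f s * o
      rw [this]
      have : 0 ≤ s - R := by linarith
      positivity
  have hmono2 : MonotoneOn (fun s => f s * f s) (Set.Ici c) := by
    have hd : ∀ s, HasDerivAt (fun s => f s * f s) (deriv f s * f s + f s * deriv f s) s := fun s =>
      (hf.diff s).hasDerivAt.mul (hf.diff s).hasDerivAt
    apply monotoneOn_of_deriv_nonneg (convex_Ici _)
    · exact fun s hs => (hd s).continuousAt.continuousWithinAt
    · exact fun s hs => (hd s).differentiableAt.differentiableWithinAt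
    · intro s hs
      have hs' : c ≤ s := interior_subset hs
      rw [(hd s).deriv]
      have h1 := hmono (le_refl c) hs' hs'
      simp only [hc, mul_zero] at h1
      have := nonneg_of_mul_nonneg_right h1 (Real.sqrt_pos.2 (lt_of_lt_of_le (hR.trans_le hcR) hs'))
      linarith
  have ht2 : Tendsto (fun s => f s * f s) atTop (𝓝 0) := by simpa using ht.mul ht
  have h0 : f c * f c ≤ 0 := ge_of_tendsto ht2 (by
    filter_upwards [eventually_ge_atTop c] with s hs using hmono2 (le_refl c) hs hs)
  have : 0 < f c * f c := mul_self_pos.2 hne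
  linarith

theorem crit_ge {f : ℝ → ℝ} (hf : Sm f) {R : ℝ}
    (ode : ∀ t, t * deriv (deriv f) t = (t - R) * f t - deriv f t / 2) {c : ℝ} (h0c : 0 ≤ c)
    (hc : deriv f c = 0) (hcR : c < R) : f 0 ^ 2 ≤ f c ^ 2 := by
  have hD : ∀ s < R, HasDerivAt (fun s => f s * f s + s * (deriv f s * deriv f s) / (R - s))
      (s * deriv f s ^ 2 / (R - s) ^ 2) s := by
    intro s hs
    have h1 := (hf.diff s).hasDerivAt
    have h2 := (hf.deriv.diff s).hasDerivAt
    have hne : R - s ≠ 0 := by linarith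
    have h3 := (h1.mul h1).add (((hasDerivAt_id s).mul (h2.mul h2)).div ((hasDerivAt_id s).const_sub R) hne)
    refine h3.congr_deriv ?_
    simp only [Pi.mul_apply, id]
    field_simp
    have o := ode s
    linear_combination 2 * deriv f s * (R - s) * o
  have hmono : MonotoneOn (fun s => f s * f s + s * (deriv f s * deriv f s) / (R - s)) (Set.Icc 0 c) := by
    apply monotoneOn_of_deriv_nonneg (convex_Icc _ _)
    · exact fun s hs => (hD s (hs.2.trans_lt hcR)).continuousAt.continuousWithinAt
    · intro s hs
      exact (hD s ((interior_subset hs).2.trans_lt hcR)).differentiableAt.differentiableWithinAt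
    · intro s hs
      have h := interior_subset hs
      rw [(hD s (h.2.trans_lt hcR)).deriv]
      have := h.1
      positivity
  have := hmono ⟨le_rfl, h0c⟩ ⟨h0c, le_rfl⟩ h0c
  simp only [hc, mul_zero, zero_mul, zero_div, add_zero] at this
  linarith

theorem extremal (n : ℕ) : ∃ z : ℕ → ℝ, Inc (n+1) z ∧ z 0 = 0 ∧ (∀ i < n + 1, 0 ≤ z i) ∧
    ∀ i < n + 1, 1 ≤ (-1) ^ i * ff n (z i) := by
  obtain ⟨x, x1, x2, x3⟩ := QQ_zeros n
  obtain ⟨y, y1, y2, y3, y4⟩ := zeros_shift (Sm_ff n) (ff_tendsto n) n x x1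
    (fun i hi => by simp [ff, x2 i hi])
  have hprod := QQ_prod n x x1 x2 x3
  have hf0 : ff n 0 = 1 := by simp [ff, QQ_zero_eval]
  have hinc : Inc (n+1) (fun i => Nat.casesOn i 0 y) := by
    intro i hi
    rcases i with _ | i
    · exact (x3 0 (by omega)).trans (y3 0 (by omega))
    · exact y1 i (by omega)
  refine ⟨fun i => Nat.casesOn i 0 y, hinc, rfl, fun i hi => hinc.zero_le hi, ?_⟩
  intro i hi
  rcases i with _ | i
  · simp [hf0]
  · simp only
    have hin : i < n := by omega
    have hsign : 0 < (-1) ^ (i+1) * ff n (y i) := by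
      unfold ff
      rw [hprod, Polynomial.eval_prod, ← mul_assoc]
      refine mul_pos (prod_sign n (i+1) (by omega) _ ?_ ?_) (Real.exp_pos _)
      · intro j hj
        have h1 := x3 j (by omega)
        have h2 : x j < y i := lt_of_le_of_lt (x1.le (show j ≤ i by omega) hin) (y3 i hin)
        simp only [Polynomial.eval_sub, Polynomial.eval_one, Polynomial.eval_mul, Polynomial.eval_C, Polynomial.eval_X]
        have : 1 < (x j)⁻¹ * y i := by rw [inv_mul_eq_div, lt_div_iff₀ h1]; linarith
        linarith
      · intro j hj hjn
        have h1 := x3 j (by omega)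
        have h2 : y i < x j := lt_of_lt_of_le (y4 i (by omega)) (x1.le hj hjn)
        simp only [Polynomial.eval_sub, Polynomial.eval_one, Polynomial.eval_mul, Polynomial.eval_C, Polynomial.eval_X]
        have : (x j)⁻¹ * y i < 1 := by rw [inv_mul_eq_div, div_lt_one h1]; linarith
        linarith
    have hne : ff n (y i) ≠ 0 := by intro h; rw [h] at hsign; simp at hsign
    have hlt := crit_lt (Sm_ff n) (by positivity) (ff_tendsto n) (ff_ode n) (y2 i hin) hne
    have hge := crit_ge (Sm_ff n) (ff_ode n) ((x3 i hin).trans (y3 i hin)).le (y2 i hin) hlt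
    rw [hf0] at hge
    have h2 : ((-1:ℝ) ^ (i+1) * ff n (y i)) ^ 2 = ff n (y i) ^ 2 := by
      rw [mul_pow, ← pow_mul, mul_comm (i+1) 2, pow_mul]; simp
    rw [← h2] at hge
    nlinarith

theorem iter_poly (q : Polynomial ℝ) (j : ℕ) :
    deriv^[j] (fun t => q.eval t) = fun t => (Polynomial.derivative^[j] q).eval t := by
  induction j generalizing q with
  | zero => rfl
  | succ j ih =>
    rw [Function.iterate_succ, Function.comp, Function.iterate_succ, Function.comp, ← ih]
    congr 1
    funext t
    exact q.deriv

theorem ff_val (n k : ℕ) : (-1) ^ k * deriv^[k] (ff n) 0 = ∑ j ∈ Finset.range (k + 1),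
    (8 : ℝ) ^ j * (n.choose j : ℝ) * (k.choose j : ℝ) / ((2 * j).choose j : ℝ) := by
  have h := iteratedDeriv_fun_mul (n := k) (x := (0:ℝ)) (f := fun t => (QQ n).eval t)
    (g := fun t => Real.exp (-1 * t)) ((Sm_poly (QQ n)).contDiffAt.of_le (by exact_mod_cast le_top))
    ((Sm_exp (-1)).contDiffAt.of_le (by exact_mod_cast le_top))
  rw [← iteratedDeriv_eq_iterate]
  change (-1) ^ k * iteratedDeriv k (fun t => (QQ n).eval t * Real.exp (-1 * t)) 0 = _
  rw [h, Finset.mul_sum]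
  apply Finset.sum_congr rfl
  intro j hj
  have hjk : j ≤ k := by simp at hj; omega
  have e1 := iter_exp (k - j) 1 1
  simp only [one_mul] at e1
  rw [iteratedDeriv_eq_iterate, iteratedDeriv_eq_iterate, iter_poly, e1]
  simp only [mul_zero, Real.exp_zero, mul_one]
  rw [← Polynomial.coeff_zero_eq_eval_zero, Polynomial.coeff_iterate_derivative, zero_add,
    Nat.descFactorial_self, QQ_coeff, ee, Nat.centralBinom_eq_two_mul_choose]
  have h4 : (j.factorial : ℝ) ≠ 0 := by exact_mod_cast Nat.factorial_ne_zero j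
  have h5 : (((2 * j).choose j : ℕ) : ℝ) ≠ 0 := by
    exact_mod_cast (Nat.choose_pos (by omega)).ne'
  have h6 : (-1:ℝ)^k * (-1)^(k-j) * (-8)^j = 8 ^ j := by
    obtain ⟨m, rfl⟩ := Nat.exists_eq_add_of_le hjk
    rw [Nat.add_sub_cancel_left, pow_add, neg_pow (8:ℝ) j]
    have a1 : ((-1:ℝ)^j) * (-1)^j = 1 := by rw [← mul_pow]; simp
    have a2 : ((-1:ℝ)^m) * (-1)^m = 1 := by rw [← mul_pow]; simp
    linear_combination 8^j * (-1)^m * (-1)^m * a1 + 8^j * a2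
  rw [nsmul_eq_mul]
  field_simp
  rw [← h6]; ring

theorem expPoly_ker {d : ℕ} {h : Fin d → ℝ} {p : ℝ → ℝ} (hp : p ∈ expPoly d h) :
    Sm p ∧ Lop (List.ofFn h) p = fun _ => 0 := by
  obtain ⟨c, hc⟩ := hp
  have key : ∀ s : Finset (Fin d), Sm (fun t => ∑ i ∈ s, c i * t ^ (Nat.card {j : Fin d // j < i ∧ h j = h i}) * Real.exp (-(h i) * t)) ∧
      Lop (List.ofFn h) (fun t => ∑ i ∈ s, c i * t ^ (Nat.card {j : Fin d // j < i ∧ h j = h i}) * Real.exp (-(h i) * t)) = fun _ => 0 := by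
    intro s
    induction s using Finset.induction_on with
    | empty =>
      simp only [Finset.sum_empty]
      refine ⟨contDiff_const, ?_⟩
      have := ker_pe (List.ofFn h) 0 0 (by simp)
      simpa using this
    | insert i s hi ih =>
      simp only [Finset.sum_insert hi]
      set N := Nat.card {j : Fin d // j < i ∧ h j = h i} with hN
      have e : ∀ t, c i * t ^ N * Real.exp (-(h i) * t)
          = (Polynomial.C (c i) * Polynomial.X ^ N).eval t * Real.exp (-(h i) * t) := by
        intro t; simp
      simp only [e]
      have s1 := Sm_pe (Polynomial.C (c i) * Polynomial.X ^ N) (h i)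
      have k1 := ker_pe (List.ofFn h) (h i) (Polynomial.C (c i) * Polynomial.X ^ N) (by
        intro m hm
        have hcount : N < (List.ofFn h).count (h i) := by
          have : (List.ofFn h).count (h i) = (Finset.univ.filter (fun j => h i = h j)).card := by
            rw [← Multiset.coe_count, ← Fin.univ_val_map, Multiset.count_map]; rfl
          rw [this, hN, Nat.card_eq_fintype_card, Fintype.card_subtype]
          apply Finset.card_lt_card
          rw [Finset.ssubset_iff_of_subset]
          · exact ⟨i, by simp, by simp⟩
          · intro j hj
            simp at hj ⊢
            exact hj.2.symm
        rw [Polynomial.coeff_C_mul, Polynomial.coeff_X_pow, if_neg (by omega), mul_zero])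
      have l1 := Lop_lin (List.ofFn h) s1 ih.1 1 1
      have l2 := s1.lin ih.1 1 1
      rw [k1, ih.2] at l1
      simp only [one_mul, add_zero] at l1 l2
      exact ⟨l2, l1⟩
  have hpe : p = fun t => ∑ i : Fin d, c i * t ^ (Nat.card {j : Fin d // j < i ∧ h j = h i}) * Real.exp (-(h i) * t) := funext hc
  rw [hpe]
  exact key Finset.univ

theorem bdd {p : ℝ → ℝ} (hp : Continuous p) (ht : Tendsto p atTop (𝓝 0)) :
    BddAbove ((fun t => |p t|) '' Set.Ici (0 : ℝ)) := by
  obtain ⟨T, hT⟩ := eventually_atTop.1 ((ht.abs).eventually_lt_const (show |(0:ℝ)| < 1 by simp))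
  obtain ⟨M, hM⟩ := (isCompact_Icc (a := (0:ℝ)) (b := T)).bddAbove_image (f := fun t => |p t|)
    (by fun_prop)
  refine ⟨max M 1, ?_⟩
  rintro _ ⟨t, ht0, rfl⟩
  rcases le_total t T with h | h
  · exact le_max_of_le_left (hM ⟨t, ⟨ht0, h⟩, rfl⟩)
  · exact le_max_of_le_right (hT t h).le

end MB

theorem markov_bernstein_explicit (d k : ℕ) (hd : 1 ≤ d) (hk : 1 ≤ k)
    (h : Fin d → ℝ) (hmono : Monotone h) (hpos : ∀ i, 0 < h i) (hone : ∀ i, h i ≤ 1)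
    (p : ℝ → ℝ) (hp : p ∈ expPoly d h) :
    ∀ t : ℝ, 0 ≤ t →
      |iteratedDeriv k p t| ≤
        (∑ j ∈ Finset.range (k + 1),
            (8 : ℝ) ^ j * ((d - 1).choose j : ℝ) * (k.choose j : ℝ) / ((2 * j).choose j : ℝ))
          * supAbs p := by
  intro t ht
  obtain ⟨hS, hK⟩ := MB.expPoly_ker hp
  obtain ⟨n, rfl⟩ : ∃ n, d = n + 1 := ⟨d - 1, by omega⟩
  obtain ⟨z, z1, z2, z3, z4⟩ := MB.extremal n
  have hmem : ∀ x ∈ List.ofFn h, 0 < x ∧ x ≤ 1 := by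
    intro x hx
    rw [List.mem_ofFn] at hx
    obtain ⟨i, rfl⟩ := hx
    exact ⟨hpos i, hone i⟩
  have hlen : (List.ofFn h).length = n + 1 := by simp
  have htend := MB.decay_ker _ (fun a ha => (hmem a ha).1) hS hK 0
  have hb := MB.bdd hS.diff.continuous htend
  have hSs : MB.Sm (fun s => p (s + t)) := by
    unfold MB.Sm at *; fun_prop
  have hKs : MB.Lop (List.ofFn h) (fun s => p (s + t)) = fun _ => 0 := by
    rw [MB.Lop_shift, hK]
  have hiter : iteratedDeriv k p t = deriv^[k] (fun s => p (s + t)) 0 := by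
    rw [← iteratedDeriv_eq_iterate, iteratedDeriv_comp_add_const]; simp
  rw [hiter, Nat.add_sub_cancel, ← MB.ff_val]
  have key : ∀ B > supAbs p, |deriv^[k] (fun s => p (s + t)) 0| ≤ (-1) ^ k * deriv^[k] (MB.ff n) 0 * B := by
    intro B hB
    refine MB.compare (List.ofFn h) (by intro h0; rw [h0] at hlen; simp at hlen) z
      (by rw [hlen]; exact z1) z2 (MB.Sm_ff n) (by rw [hlen]; exact MB.ff_ker n)
      (by rw [hlen]; exact z4) k hmem hSs hKs ?_
    rw [hlen]
    intro i hi
    exact lt_of_le_of_lt (le_csSup hb ⟨z i + t, add_nonneg (z3 i hi) ht, rfl⟩) hB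
  have hlim : Tendsto (fun B => (-1) ^ k * deriv^[k] (MB.ff n) 0 * B) (𝓝[>] (supAbs p))
      (𝓝 ((-1) ^ k * deriv^[k] (MB.ff n) 0 * supAbs p)) := by
    apply tendsto_nhdsWithin_of_tendsto_nhds
    exact (continuous_const.mul continuous_id).tendsto _
  exact ge_of_tendsto hlim (by filter_upwards [self_mem_nhdsWithin] with B hB using key B hB)
end
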